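/- arXiv:2603.00752 — 3 statements merged into one kernel-verified Lean document; each statement's English description precedes it below -/
import Mathlib

section
/- Let K be a field and S = K[x_1,…,x_n]. Let G_0 be a finite simple graph on vertex set [n−1], let F_0 be a star graph on [n] with center n, let s ≥ 2 be an integer, and let H_0 be the graph on [n] with edge set E(G_0) ∪ E(F_0). Assume: (1) for every pair of integers i ≥ 1 and j ≥ 0 with i + j = s, the ideal I_{G_0}^i · I_{F_0}^j has linear quotients; and (2) every edge of G_0 shares a vertex with some edge of F_0. Then I_{H_0}^s has linear quotients. Moreover, a linear quotient ordering of I_{H_0}^s is obtained by concatenating linear quotient orderings O_s, O_{s−1}, …, O_1, O_0, where O_j is a linear quotient ordering of the minimal generators of I_{G_0}^{s−j} I_{F_0}^j for 0 ≤ j ≤ s−1 and O_s is a linear quotient ordering of the minimal generators of I_{F_0}^s. -/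
open MvPolynomial

noncomputable section

/-- The edge ideal of a finite simple graph on vertex set `Fin n`
(vertex with index `v` corresponds to the vertex `v+1` of `[n]`). -/
def edgeIdeal (K : Type*) [Field K] {n : ℕ} (G : SimpleGraph (Fin n)) :
    Ideal (MvPolynomial (Fin n) K) :=
  Ideal.span {p | ∃ i j : Fin n, G.Adj i j ∧ p = X i * X j}

/-- `d` is the exponent vector of a minimal monomial generator of `I`. -/
def IsMinGen {K : Type*} [Field K] {n : ℕ} (I : Ideal (MvPolynomial (Fin n) K))
    (d : Fin n →₀ ℕ) : Prop :=
  monomial d (1 : K) ∈ I ∧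
    ∀ e : Fin n →₀ ℕ, e ≤ d → e ≠ d → monomial e (1 : K) ∉ I

/-- A list of exponent vectors `L = [d_1, …, d_r]` is a linear quotient ordering if
for every `i ≥ 2` the colon ideal `(x^{d_1}, …, x^{d_{i-1}}) : x^{d_i}` is generated
by a subset of the variables. -/
def IsLinQuotOrder (K : Type*) [Field K] {n : ℕ} (L : List (Fin n →₀ ℕ)) : Prop :=
  ∀ i : Fin L.length, 0 < i.val →
    ∃ V : Set (Fin n),
      Submodule.colon
        (Ideal.span {m : MvPolynomial (Fin n) K |
          ∃ k : Fin L.length, k.val < i.val ∧ m = monomial (L.get k) 1})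
        (Ideal.span {monomial (L.get i) (1 : K)}) =
      Ideal.span ((fun v : Fin n => (X v : MvPolynomial (Fin n) K)) '' V)

/-- A monomial ideal has linear quotients if it is principal or admits a
linear quotient ordering of its minimal monomial generators. -/
def HasLinearQuotients {K : Type*} [Field K] {n : ℕ}
    (I : Ideal (MvPolynomial (Fin n) K)) : Prop :=
  (∃ p, I = Ideal.span {p}) ∨
    ∃ L : List (Fin n →₀ ℕ), L.Nodup ∧ (∀ d, d ∈ L ↔ IsMinGen I d) ∧ IsLinQuotOrder K L

/-- `lexLt d e` : the monomial `x^d` is lexicographically smaller than `x^e`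
for the lexicographic order induced by `x_n > x_{n-1} > … > x_1`. -/
def lexLt {n : ℕ} (d e : Fin n →₀ ℕ) : Prop :=
  ∃ k : Fin n, d k < e k ∧ ∀ m : Fin n, k < m → d m = e m

/-- `L` lists the minimal monomial generators of `I` in decreasing lexicographic order. -/
def LexDecMinGenOrder {K : Type*} [Field K] {n : ℕ} (I : Ideal (MvPolynomial (Fin n) K))
    (L : List (Fin n →₀ ℕ)) : Prop :=
  List.Pairwise (fun d e => lexLt e d) L ∧ ∀ d, d ∈ L ↔ IsMinGen I d

/-- The anticycle on `[m]` : `{i,j}` is an edge iff `i ≠ j` and `i - j ≢ ±1 (mod m)`. -/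
def anticycle (m : ℕ) : SimpleGraph (Fin m) where
  Adj i j := i ≠ j ∧ (i.val + 1) % m ≠ j.val ∧ (j.val + 1) % m ≠ i.val
  symm := ⟨fun i j h => ⟨h.1.symm, h.2.2, h.2.1⟩⟩
  loopless := ⟨fun i h => h.1 rfl⟩

/-- The anticycle on `[m]` regarded as a graph on the vertex set `[n]`. -/
def anticycleIn (n m : ℕ) : SimpleGraph (Fin n) where
  Adj i j := i ≠ j ∧ i.val < m ∧ j.val < m ∧ (i.val + 1) % m ≠ j.val ∧ (j.val + 1) % m ≠ i.val
  symm := ⟨fun i j h => ⟨h.1.symm, h.2.2.1, h.2.1, h.2.2.2.2, h.2.2.2.1⟩⟩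
  loopless := ⟨fun i h => h.1 rfl⟩

/-- The star on `[n]` with edges `{i, n}` for `1 ≤ i ≤ n - 3`
(in the `0`-indexed picture: edges `{i, n-1}` for `i ≤ n - 4`). -/
def starF (n : ℕ) : SimpleGraph (Fin n) :=
  SimpleGraph.fromRel (fun i j => i.val + 4 ≤ n ∧ j.val = n - 1)

/-- `AgreeOrder n s i j t` : the degree-`s` monomials with ascending (0-indexed)
index sequences `i` and `j` agree in order `t`. -/
def AgreeOrder (n s : ℕ) (i j : ℕ → Fin n) (t : ℕ) : Prop :=
  if t = 0 then j (s - 1) < i (s - 1)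
  else (∀ l, s - t ≤ l → l ≤ s - 1 → i l = j l) ∧ i (s - t - 1) ≠ j (s - t - 1)

/-!
For monomials, "the colon ideal is generated by variables" is an exchange property of exponent
vectors. Grade the generators of `I_{H₀}^s` by the exponent `j` of the center `c` of the star: the
block of degree `j` consists of the generators of `I_{G₀}^{s-j} I_{F₀}^j`. If `d` lies in block
`j < s`, replacing an edge of `G₀` occurring in `d` by an edge of `F₀` meeting it gives an element
of block `j + 1` dividing `x_c x^d`. Hence the variable `x_c` alone handles every exchange with an
earlier block, while exchanges inside a block are given. The powers of the star ideal are
`x_c^s` times powers of an ideal generated by variables, and these are treated by the same argument,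
adjoining one variable at a time.
-/

open Finsupp SimpleGraph
open scoped Pointwise

section MonomialIdeal

/-- The monomial ideal generated by the monomials whose exponent vectors lie in `A`. -/
def monomialIdeal (R : Type*) [CommSemiring R] {σ : Type*} (A : Set (σ →₀ ℕ)) :
    Ideal (MvPolynomial σ R) :=
  Ideal.span ((fun e => monomial e (1 : R)) '' A)

variable {σ R : Type*} [CommSemiring R] {A B : Set (σ →₀ ℕ)} {d : σ →₀ ℕ}

theorem mem_monomialIdeal {p : MvPolynomial σ R} :
    p ∈ monomialIdeal R A ↔ ∀ m ∈ p.support, ∃ e ∈ A, e ≤ m :=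
  mem_ideal_span_monomial_image

theorem monomial_mem_monomialIdeal [Nontrivial R] :
    monomial d (1 : R) ∈ monomialIdeal R A ↔ ∃ e ∈ A, e ≤ d := by
  classical simp [mem_monomialIdeal, support_monomial]

theorem monomialIdeal_le_iff [Nontrivial R] :
    monomialIdeal R A ≤ monomialIdeal R B ↔ ∀ a ∈ A, ∃ b ∈ B, b ≤ a := by
  simp [monomialIdeal.eq_def R A, Ideal.span_le, Set.subset_def, monomial_mem_monomialIdeal]

theorem span_image_X_eq_monomialIdeal (V : Set σ) :
    Ideal.span ((fun v => (X v : MvPolynomial σ R)) '' V) =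
      monomialIdeal R ((fun v => single v 1) '' V) := by
  rw [monomialIdeal, Set.image_image]
  rfl

theorem monomialIdeal_union :
    monomialIdeal R (A ∪ B) = monomialIdeal R A ⊔ monomialIdeal R B := by
  simp only [monomialIdeal, Set.image_union, Ideal.span_union]

theorem monomialIdeal_mul :
    monomialIdeal R A * monomialIdeal R B = monomialIdeal R (A + B) := by
  simp only [monomialIdeal, Ideal.span_mul_span']
  congr 1
  rw [← Set.image2_mul, ← Set.image2_add, Set.image2_image_left, Set.image2_image_right,
    Set.image_image2]
  simp [monomial_mul]

theorem monomialIdeal_pow (s : ℕ) : monomialIdeal R A ^ s = monomialIdeal R (s • A) := by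
  induction s with
  | zero => simp [monomialIdeal, Ideal.one_eq_top]
  | succ s ih => rw [pow_succ, ih, monomialIdeal_mul, succ_nsmul]

theorem colon_monomialIdeal_span_monomial :
    (monomialIdeal R A).colon (Ideal.span {monomial d (1 : R)} : Set (MvPolynomial σ R)) =
      monomialIdeal R ((fun e => e - d) '' A) := by
  ext p
  simp only [Ideal.mem_colon_span_singleton, mem_monomialIdeal, Set.exists_mem_image,
    tsub_le_iff_right]
  constructor
  · intro h m hm
    refine h (m + d) ?_
    simpa [coeff_mul_monomial] using hm
  · intro h m hm
    rw [MvPolynomial.mem_support_iff, coeff_mul_monomial', mul_one, ite_ne_right_iff] at hm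
    obtain ⟨hdm, hm⟩ := hm
    simpa [tsub_add_cancel_of_le hdm] using h (m - d) (MvPolynomial.mem_support_iff.2 hm)

theorem exists_monomialIdeal_eq_span_image_X_iff [Nontrivial R] :
    (∃ V : Set σ, monomialIdeal R A =
      Ideal.span ((fun v => (X v : MvPolynomial σ R)) '' V)) ↔
      ∀ e ∈ A, ∃ f ∈ A, ∃ v, f ≤ single v 1 ∧ 0 < e v := by
  simp only [span_image_X_eq_monomialIdeal, le_antisymm_iff, monomialIdeal_le_iff,
    Set.exists_mem_image, Set.forall_mem_image, single_le_iff]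
  constructor
  · rintro ⟨V, hAV, hVA⟩ e he
    obtain ⟨v, hv, hev⟩ := hAV e he
    obtain ⟨f, hf, hfv⟩ := hVA hv
    exact ⟨f, hf, v, hfv, hev⟩
  · intro h
    refine ⟨{v | ∃ f ∈ A, f ≤ single v 1}, fun e he => ?_, fun v hv => hv⟩
    obtain ⟨f, hf, v, hfv, hev⟩ := h e he
    exact ⟨v, ⟨f, hf, hfv⟩, hev⟩

theorem subsingleton_of_monomialIdeal_eq_span_singleton {R' : Type*} [CommRing R'] [IsDomain R']
    (hA : IsAntichain (· ≤ ·) A) {p : MvPolynomial σ R'}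
    (hp : monomialIdeal R' A = Ideal.span {p}) : A.Subsingleton := by
  have eq_of_divisor : ∀ d ∈ A, ∀ m u, m ≤ d → u ≠ 0 → p = monomial m u → d = m := by
    rintro d hd m u hmd hu rfl
    have hmem : monomial m u ∈ monomialIdeal R' A := hp ▸ Ideal.mem_span_singleton_self _
    obtain ⟨f, hf, hfm⟩ := mem_monomialIdeal.1 hmem m (by classical simp [support_monomial, hu])
    exact le_antisymm (hA.eq hf hd (hfm.trans hmd) ▸ hfm) hmd
  have eq_monomial : ∀ d ∈ A, ∃ u : R', u ≠ 0 ∧ p = monomial d u := by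
    intro d hd
    have hdvd : p ∣ monomial d 1 := by
      rw [← Ideal.mem_span_singleton, ← hp]
      exact monomial_mem_monomialIdeal.2 ⟨d, hd, le_rfl⟩
    obtain ⟨m, u, hmd, hu, hpm⟩ := dvd_monomial_one_iff_exists.1 hdvd
    exact ⟨u, hu.ne_zero, eq_of_divisor d hd m u hmd hu.ne_zero hpm ▸ hpm⟩
  intro d hd e he
  obtain ⟨u, hu, hpd⟩ := eq_monomial d hd
  obtain ⟨w, -, hpe⟩ := eq_monomial e he
  exact ((monomial_eq_monomial_iff ..).1 (hpd.symm.trans hpe)).elim And.left (absurd ·.1 hu)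

end MonomialIdeal

section SetPower

variable {M : Type*} [AddCommMonoid M] {A B : Set M} {d : M}

theorem map_eq_nsmul_of_mem_nsmul {M' : Type*} [AddCommMonoid M'] {φ : M →+ M'} {x : M'}
    (hA : ∀ a ∈ A, φ a = x) {s : ℕ} (hd : d ∈ s • A) : φ d = s • x := by
  have hφ : φ '' (s • A) ⊆ {s • x} := by
    rw [Set.image_nsmul, ← Set.nsmul_singleton]
    exact Set.nsmul_subset_nsmul_left (Set.image_subset_iff.2 hA)
  exact hφ ⟨d, hd, rfl⟩

theorem mem_nsmul_union {s : ℕ} :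
    d ∈ s • (A ∪ B) ↔ ∃ j ≤ s, d ∈ (s - j) • A + j • B := by
  constructor
  · induction s generalizing d with
    | zero => exact fun h => ⟨0, le_rfl, by simpa using h⟩
    | succ s ih =>
      rw [succ_nsmul]
      rintro ⟨m, hm, e, he, rfl⟩
      obtain ⟨j, hj, x, hx, y, hy, rfl⟩ := ih hm
      rcases he with he | he
      · refine ⟨j, by omega, x + e, ?_, y, hy, add_right_comm x e y⟩
        rw [Nat.succ_sub hj, succ_nsmul]
        exact Set.add_mem_add hx he
      · refine ⟨j + 1, by omega, x, by simpa using hx, y + e, ?_, (add_assoc x y e).symm⟩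
        rw [succ_nsmul]
        exact Set.add_mem_add hy he
  · rintro ⟨j, hj, hd⟩
    rw [← Nat.sub_add_cancel hj, add_nsmul]
    exact Set.add_subset_add (Set.nsmul_subset_nsmul_left Set.subset_union_left)
      (Set.nsmul_subset_nsmul_left Set.subset_union_right) hd

theorem exists_le_add_of_mem_succ_nsmul_add_nsmul [PartialOrder M] [IsOrderedAddMonoid M] {x : M}
    (hAB : ∀ a ∈ A, ∃ b ∈ B, b ≤ a + x) {i j : ℕ} (hd : d ∈ (i + 1) • A + j • B) :
    ∃ f ∈ i • A + (j + 1) • B, f ≤ d + x := by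
  rw [succ_nsmul] at hd
  obtain ⟨_, ⟨p, hp, a, ha, rfl⟩, q, hq, rfl⟩ := hd
  obtain ⟨b, hb, hba⟩ := hAB a ha
  refine ⟨p + (q + b), Set.add_mem_add hp ?_, ?_⟩
  · rw [succ_nsmul]
    exact Set.add_mem_add hq hb
  · calc p + (q + b) ≤ p + (q + (a + x)) := by gcongr
      _ = p + a + q + x := by abel

end SetPower

section DescConcat

/-- The concatenation `O s ++ O (s - 1) ++ ⋯ ++ O 0`. -/
def descConcat {α : Type*} (O : ℕ → List α) (s : ℕ) : List α :=
  ((List.range (s + 1)).reverse.map O).flatten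

variable {α : Type*} {O : ℕ → List α} {s : ℕ}

theorem descConcat_succ :
    descConcat O (s + 1) = descConcat (fun j => O (j + 1)) s ++ O 0 := by
  rw [descConcat, List.range_succ_eq_map]
  simp [descConcat, Function.comp_def]

theorem mem_descConcat {x : α} : x ∈ descConcat O s ↔ ∃ j ≤ s, x ∈ O j := by
  simp [descConcat]

theorem nodup_descConcat (hO : ∀ j ≤ s, (O j).Nodup)
    (hdisj : ∀ j k, j < k → k ≤ s → (O j).Disjoint (O k)) : (descConcat O s).Nodup := by
  rw [descConcat, List.nodup_flatten, List.pairwise_map, List.pairwise_reverse]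
  refine ⟨by simpa [Nat.lt_succ_iff] using hO, ?_⟩
  refine List.pairwise_lt_range.imp_of_mem fun {j k} _ hk hjk => (hdisj j k hjk ?_).symm
  exact Nat.lt_succ_iff.1 (List.mem_range.1 hk)

end DescConcat

section ExchangeOrder

variable {σ : Type*}

/-- The exponent form of "the colon ideal `(x^e : e ∈ A) : x^d` is generated by variables":
each `x^e / gcd(x^e, x^d)` is divisible by a variable `x_v` for which some generator divides
`x_v x^d`. -/
def ExchangeAt (A : Set (σ →₀ ℕ)) (d : σ →₀ ℕ) : Prop :=
  ∀ e ∈ A, ∃ f ∈ A, ∃ v, f ≤ d + single v 1 ∧ d v < e v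

/-- The exponent form of a linear quotient ordering: each entry satisfies the exchange property
with respect to the entries preceding it. -/
def IsExchangeOrder (L : List (σ →₀ ℕ)) : Prop :=
  ∀ A d B, L = A ++ d :: B → ExchangeAt {e | e ∈ A} d

/-- `L` enumerates the set of exponents `A` without repetition in an exchange order. -/
def IsExchangeOrderOf (A : Set (σ →₀ ℕ)) (L : List (σ →₀ ℕ)) : Prop :=
  L.Nodup ∧ (∀ d, d ∈ L ↔ d ∈ A) ∧ IsExchangeOrder L

variable {L M : List (σ →₀ ℕ)}

theorem isExchangeOrder_nil : IsExchangeOrder ([] : List (σ →₀ ℕ)) := by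
  simp [IsExchangeOrder]

theorem isExchangeOrder_singleton (d : σ →₀ ℕ) : IsExchangeOrder [d] := by
  intro A d' B h
  cases A with
  | nil => simp [ExchangeAt]
  | cons a A => simp at h

theorem IsExchangeOrder.append (hL : IsExchangeOrder L) (hM : IsExchangeOrder M)
    (h : ∀ d ∈ M, ExchangeAt {e | e ∈ L} d) : IsExchangeOrder (L ++ M) := by
  intro A d B hAB e he
  rcases List.append_eq_append_iff.1 hAB with ⟨C, rfl, rfl⟩ | ⟨C, rfl, hC⟩
  · rcases List.mem_append.1 he with he | he
    · obtain ⟨f, hf, hfd⟩ := h d (by simp) e he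
      exact ⟨f, List.mem_append_left _ hf, hfd⟩
    · obtain ⟨f, hf, hfd⟩ := hM C d B rfl e he
      exact ⟨f, List.mem_append_right _ hf, hfd⟩
  · rcases List.cons_eq_append_iff.1 hC with ⟨rfl, rfl⟩ | ⟨C, rfl, rfl⟩
    · simpa using h d (by simp) e (by simpa using he)
    · exact hL A d C rfl e he

theorem IsExchangeOrder.map_add_right (hL : IsExchangeOrder L) (c : σ →₀ ℕ) :
    IsExchangeOrder (L.map (· + c)) := by
  intro A d B h e he
  obtain ⟨A, M, rfl, rfl, hM⟩ := List.map_eq_append_iff.1 h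
  obtain ⟨d, B, rfl, rfl, rfl⟩ := List.map_eq_cons_iff.1 hM
  obtain ⟨e', he', rfl⟩ := List.mem_map.1 he
  obtain ⟨f, hf, v, hfd, hde⟩ := hL A d B rfl e' he'
  refine ⟨f + c, List.mem_map.2 ⟨f, hf, rfl⟩, v, ?_, by simpa using hde⟩
  rw [add_right_comm]
  gcongr

-- The single variable `c` witnesses the exchange between different blocks.
theorem IsExchangeOrder.descConcat {O : ℕ → List (σ →₀ ℕ)} {s : ℕ} {c : σ}
    (hO : ∀ j ≤ s, IsExchangeOrder (O j))
    (hlt : ∀ j k, j < k → k ≤ s → ∀ d ∈ O j, ∀ e ∈ O k, d c < e c)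
    (hstep : ∀ j < s, ∀ d ∈ O j, ∃ f ∈ O (j + 1), f ≤ d + single c 1) :
    IsExchangeOrder (descConcat O s) := by
  induction s generalizing O with
  | zero => simpa [_root_.descConcat] using hO 0 le_rfl
  | succ s ih =>
    rw [descConcat_succ]
    refine (ih (fun j hj => hO (j + 1) (by omega))
      (fun j k hjk hk => hlt (j + 1) (k + 1) (by omega) (by omega))
      (fun j hj => hstep (j + 1) (by omega))).append (hO 0 (by omega)) ?_
    intro d hd e he
    obtain ⟨j, hj, hej⟩ := mem_descConcat.1 he
    obtain ⟨f, hf, hfd⟩ := hstep 0 (by omega) d hd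
    exact ⟨f, mem_descConcat.2 ⟨0, by omega, hf⟩, c, hfd,
      hlt 0 (j + 1) (by omega) (by omega) d hd e hej⟩

variable {A B : Set (σ →₀ ℕ)}

theorem IsExchangeOrderOf.add_singleton (hL : IsExchangeOrderOf A L) (c : σ →₀ ℕ) :
    IsExchangeOrderOf (A + {c}) (L.map (· + c)) :=
  ⟨hL.1.map (add_left_injective c), by simp [hL.2.1], hL.2.2.map_add_right c⟩

theorem exists_isExchangeOrderOf_of_subsingleton (hA : A.Subsingleton) :
    ∃ L, IsExchangeOrderOf A L := by
  rcases hA.eq_empty_or_singleton with rfl | ⟨d, rfl⟩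
  · exact ⟨[], List.nodup_nil, by simp, isExchangeOrder_nil⟩
  · exact ⟨[d], List.nodup_singleton d, by simp, isExchangeOrder_singleton d⟩

theorem IsExchangeOrderOf.nsmul_union {c : σ} (hA : ∀ a ∈ A, a c = 0) (hB : ∀ b ∈ B, b c = 1)
    (hAB : ∀ a ∈ A, ∃ b ∈ B, b ≤ a + single c 1) {s : ℕ} {O : ℕ → List (σ →₀ ℕ)}
    (hO : ∀ j ≤ s, IsExchangeOrderOf ((s - j) • A + j • B) (O j)) :
    IsExchangeOrderOf (s • (A ∪ B)) (descConcat O s) := by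
  have apply_center : ∀ j ≤ s, ∀ d ∈ O j, d c = j := by
    intro j hj d hd
    obtain ⟨x, hx, y, hy, rfl⟩ := ((hO j hj).2.1 d).1 hd
    have hxc : applyAddHom c x = _ := map_eq_nsmul_of_mem_nsmul hA hx
    have hyc : applyAddHom c y = _ := map_eq_nsmul_of_mem_nsmul hB hy
    simpa using congrArg₂ (· + ·) hxc hyc
  have hlt : ∀ j k, j < k → k ≤ s → ∀ d ∈ O j, ∀ e ∈ O k, d c < e c := by
    intro j k hjk hk d hd e he
    rwa [apply_center j (by omega) d hd, apply_center k hk e he]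
  refine ⟨nodup_descConcat (fun j hj => (hO j hj).1)
    fun j k hjk hk d hdj hdk => (hlt j k hjk hk d hdj d hdk).false, fun d => ?_,
    .descConcat (fun j hj => (hO j hj).2.2) hlt fun j hj d hd => ?_⟩
  · rw [mem_descConcat, mem_nsmul_union]
    exact exists_congr fun j => and_congr_right fun hj => (hO j hj).2.1 d
  · have hd' := ((hO j hj.le).2.1 d).1 hd
    rw [show s - j = s - (j + 1) + 1 by omega] at hd'
    obtain ⟨f, hf, hfd⟩ := exists_le_add_of_mem_succ_nsmul_add_nsmul hAB hd'
    exact ⟨f, ((hO (j + 1) hj).2.1 f).2 hf, hfd⟩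

theorem exists_isExchangeOrderOf_nsmul_union {c : σ} (hA : ∀ a ∈ A, a c = 0)
    (hB : ∀ b ∈ B, b c = 1) (hAB : ∀ a ∈ A, ∃ b ∈ B, b ≤ a + single c 1) {s : ℕ}
    (h : ∀ j ≤ s, ∃ L, IsExchangeOrderOf ((s - j) • A + j • B) L) :
    ∃ L, IsExchangeOrderOf (s • (A ∪ B)) L := by
  choose! O hO using h
  exact ⟨descConcat O s, .nsmul_union hA hB hAB hO⟩

-- Adjoining one variable to `V` is itself an instance of the composite construction.
theorem exists_isExchangeOrderOf_nsmul_image_single {V : Set σ} (hV : V.Finite) (s : ℕ) :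
    ∃ L, IsExchangeOrderOf (s • (fun v => single v 1) '' V) L := by
  induction V, hV using Set.Finite.induction_on generalizing s with
  | empty =>
    refine exists_isExchangeOrderOf_of_subsingleton ?_
    cases s <;> simp [← Set.singleton_zero]
  | @insert a V ha _ ih =>
    rw [Set.image_insert_eq, ← Set.union_singleton]
    refine exists_isExchangeOrderOf_nsmul_union (c := a) ?_ (by simp) ?_ fun j _ => ?_
    · rintro _ ⟨v, hv, rfl⟩
      exact single_eq_of_ne (ne_of_mem_of_not_mem hv ha).symm
    · exact fun x _ => ⟨single a 1, rfl, le_add_self⟩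
    · obtain ⟨L, hL⟩ := ih (s - j)
      rw [Set.nsmul_singleton]
      exact ⟨_, hL.add_singleton _⟩

end ExchangeOrder

section LinearQuotients

theorem isAntichain_of_forall_degree_eq {σ : Type*} {A : Set (σ →₀ ℕ)} {N : ℕ}
    (hA : ∀ d ∈ A, d.degree = N) : IsAntichain (· ≤ ·) A := by
  intro d hd e he hne hde
  obtain ⟨c, rfl⟩ := exists_add_of_le hde
  have hc : c.degree = 0 := by
    have := hA _ he
    rw [map_add, hA d hd] at this
    omega
  exact hne (by simp [(degree_eq_zero_iff c).1 hc])

/-- `L` is a linear quotient ordering of the minimal monomial generators of `I`. -/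
def IsLinQuotOrderOf {K : Type*} [Field K] {n : ℕ} (I : Ideal (MvPolynomial (Fin n) K))
    (L : List (Fin n →₀ ℕ)) : Prop :=
  L.Nodup ∧ (∀ d, d ∈ L ↔ IsMinGen I d) ∧ IsLinQuotOrder K L

variable {K : Type*} [Field K] {n : ℕ} {A B : Set (Fin n →₀ ℕ)} {d : Fin n →₀ ℕ}
  {L : List (Fin n →₀ ℕ)}

theorem isMinGen_monomialIdeal_iff (hA : IsAntichain (· ≤ ·) A) :
    IsMinGen (monomialIdeal K A) d ↔ d ∈ A := by
  simp only [IsMinGen, monomial_mem_monomialIdeal]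
  constructor
  · rintro ⟨⟨e, he, hed⟩, hmin⟩
    by_contra hd
    exact hmin e hed (ne_of_mem_of_not_mem he hd) ⟨e, he, le_rfl⟩
  · rintro hd
    refine ⟨⟨d, hd, le_rfl⟩, ?_⟩
    rintro e hed hne ⟨f, hf, hfe⟩
    exact hne (le_antisymm hed (hA.eq hf hd (hfe.trans hed) ▸ hfe))

theorem exists_colon_eq_span_image_X_iff :
    (∃ V : Set (Fin n), (monomialIdeal K A).colon
        (Ideal.span {monomial d (1 : K)} : Set (MvPolynomial (Fin n) K)) =
      Ideal.span ((fun v => (X v : MvPolynomial (Fin n) K)) '' V)) ↔ ExchangeAt A d := by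
  simp only [colon_monomialIdeal_span_monomial, exists_monomialIdeal_eq_span_image_X_iff,
    ExchangeAt, Set.forall_mem_image, Set.exists_mem_image, tsub_le_iff_left, tsub_apply,
    tsub_pos_iff_lt]

theorem isLinQuotOrder_iff_isExchangeOrder : IsLinQuotOrder K L ↔ IsExchangeOrder L := by
  have preceding : ∀ i : Fin L.length,
      Ideal.span {m : MvPolynomial (Fin n) K |
          ∃ k : Fin L.length, k.val < i.val ∧ m = monomial (L.get k) 1} =
        monomialIdeal K {e | e ∈ L.take i} := by
    intro i
    rw [monomialIdeal]
    congr 1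
    ext m
    simp only [Set.mem_ofPred_eq, Set.mem_image, List.mem_take_iff_getElem, List.get_eq_getElem]
    constructor
    · rintro ⟨k, hk, rfl⟩
      exact ⟨_, ⟨k, by omega, rfl⟩, rfl⟩
    · rintro ⟨_, ⟨k, hk, rfl⟩, rfl⟩
      exact ⟨⟨k, by omega⟩, by grind, rfl⟩
  simp only [IsLinQuotOrder, preceding, exists_colon_eq_span_image_X_iff]
  constructor
  · rintro h A d B rfl e he
    simpa using h ⟨A.length, by simp⟩ (List.length_pos_of_mem he) e (by simpa using he)
  · exact fun h i _ => h (L.take i) (L.get i) (L.drop (i + 1)) (by simp)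

theorem isLinQuotOrderOf_monomialIdeal_iff (hA : IsAntichain (· ≤ ·) A) :
    IsLinQuotOrderOf (monomialIdeal K A) L ↔ IsExchangeOrderOf A L := by
  simp only [IsLinQuotOrderOf, IsExchangeOrderOf, isMinGen_monomialIdeal_iff hA,
    isLinQuotOrder_iff_isExchangeOrder]

theorem hasLinearQuotients_monomialIdeal_iff (hA : IsAntichain (· ≤ ·) A) :
    HasLinearQuotients (monomialIdeal K A) ↔ ∃ L, IsExchangeOrderOf A L := by
  simp only [← isLinQuotOrderOf_monomialIdeal_iff (K := K) hA]
  refine ⟨?_, Or.inr⟩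
  rintro (⟨p, hp⟩ | h)
  · simp only [isLinQuotOrderOf_monomialIdeal_iff hA]
    exact exists_isExchangeOrderOf_of_subsingleton
      (subsingleton_of_monomialIdeal_eq_span_singleton hA hp)
  · exact h

theorem composite_linear_quotient_ordering_general (K : Type*) [Field K] {n : ℕ}
    {A B : Set (Fin n →₀ ℕ)} {N : ℕ} (hN : ∀ d ∈ A ∪ B, d.degree = N) {c : Fin n}
    (hA : ∀ a ∈ A, a c = 0) (hB : ∀ b ∈ B, b c = 1)
    (hAB : ∀ a ∈ A, ∃ b ∈ B, b ≤ a + single c 1) (s : ℕ) :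
    ((∀ j ≤ s, HasLinearQuotients (monomialIdeal K A ^ (s - j) * monomialIdeal K B ^ j)) →
      HasLinearQuotients ((monomialIdeal K A ⊔ monomialIdeal K B) ^ s)) ∧
    ∀ O : ℕ → List (Fin n →₀ ℕ),
      (∀ j ≤ s, IsLinQuotOrderOf (monomialIdeal K A ^ (s - j) * monomialIdeal K B ^ j) (O j)) →
      IsLinQuotOrderOf ((monomialIdeal K A ⊔ monomialIdeal K B) ^ s) (descConcat O s) := by
  have hanti : IsAntichain (· ≤ ·) (s • (A ∪ B)) :=
    isAntichain_of_forall_degree_eq fun d hd => map_eq_nsmul_of_mem_nsmul hN hd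
  have hanti' : ∀ j ≤ s, IsAntichain (· ≤ ·) ((s - j) • A + j • B) := fun j hj =>
    hanti.subset fun d hd => mem_nsmul_union.2 ⟨j, hj, hd⟩
  simp only [← monomialIdeal_union, monomialIdeal_pow, monomialIdeal_mul,
    hasLinearQuotients_monomialIdeal_iff hanti, isLinQuotOrderOf_monomialIdeal_iff hanti]
  exact ⟨fun h => exists_isExchangeOrderOf_nsmul_union hA hB hAB fun j hj =>
      (hasLinearQuotients_monomialIdeal_iff (hanti' j hj)).1 (h j hj),
    fun O hO => .nsmul_union hA hB hAB fun j hj =>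
      (isLinQuotOrderOf_monomialIdeal_iff (hanti' j hj)).1 (hO j hj)⟩

end LinearQuotients

section EdgeIdeal

/-- The exponent vectors of the quadratic monomials generating the edge ideal of `G`. -/
def edgeExponents {V : Type*} (G : SimpleGraph V) : Set (V →₀ ℕ) :=
  {d | ∃ i j, G.Adj i j ∧ d = single i 1 + single j 1}

variable {V : Type*} {G F : SimpleGraph V} {c : V}

theorem edgeIdeal_eq_monomialIdeal (K : Type*) [Field K] {n : ℕ} (G : SimpleGraph (Fin n)) :
    edgeIdeal K G = monomialIdeal K (edgeExponents G) := by
  rw [edgeIdeal, monomialIdeal]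
  congr 1
  ext p
  simp only [edgeExponents, Set.mem_image, Set.mem_ofPred_eq, X, monomial_mul, one_mul]
  grind

theorem edgeIdeal_sup (K : Type*) [Field K] {n : ℕ} (G F : SimpleGraph (Fin n)) :
    edgeIdeal K (G ⊔ F) = edgeIdeal K G ⊔ edgeIdeal K F := by
  simp only [edgeIdeal, ← Ideal.span_union, sup_adj]
  congr 1
  ext p
  simp only [Set.mem_union, Set.mem_ofPred_eq]
  grind

theorem degree_of_mem_edgeExponents : ∀ d ∈ edgeExponents G, d.degree = 2 := by
  rintro _ ⟨i, j, -, rfl⟩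
  simp

theorem apply_eq_zero_of_mem_edgeExponents (hG : ∀ i j, G.Adj i j → i ≠ c) :
    ∀ d ∈ edgeExponents G, d c = 0 := by
  rintro _ ⟨i, j, hij, rfl⟩
  simp [hG i j hij, hG j i hij.symm]

theorem edgeExponents_of_le_starGraph (hF : F ≤ starGraph c) :
    edgeExponents F = (fun v => single v 1) '' {v | F.Adj v c} + {single c 1} := by
  ext d
  simp only [Set.add_singleton, Set.image_image]
  constructor
  · rintro ⟨i, j, hij, rfl⟩
    rcases (starGraph_adj.1 (hF hij)).2 with rfl | rfl
    · exact ⟨j, hij.symm, add_comm _ _⟩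
    · exact ⟨i, hij, rfl⟩
  · rintro ⟨v, hv, rfl⟩
    exact ⟨v, c, hv, rfl⟩

theorem apply_center_of_mem_edgeExponents (hF : F ≤ starGraph c) :
    ∀ d ∈ edgeExponents F, d c = 1 := by
  rw [edgeExponents_of_le_starGraph hF, Set.add_singleton]
  rintro _ ⟨_, ⟨v, hv, rfl⟩, rfl⟩
  simp [F.ne_of_adj hv]

theorem hasLinearQuotients_edgeIdeal_pow_of_le_starGraph (K : Type*) [Field K] {n : ℕ}
    {F : SimpleGraph (Fin n)} {c : Fin n} (hF : F ≤ starGraph c) (s : ℕ) :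
    HasLinearQuotients (edgeIdeal K F ^ s) := by
  have hanti : IsAntichain (· ≤ ·) (s • edgeExponents F) :=
    isAntichain_of_forall_degree_eq fun d hd =>
      map_eq_nsmul_of_mem_nsmul degree_of_mem_edgeExponents hd
  rw [edgeIdeal_eq_monomialIdeal, monomialIdeal_pow, hasLinearQuotients_monomialIdeal_iff hanti,
    edgeExponents_of_le_starGraph hF, nsmul_add, Set.nsmul_singleton]
  obtain ⟨L, hL⟩ := exists_isExchangeOrderOf_nsmul_image_single {v | F.Adj v c}.toFinite s
  exact ⟨_, hL.add_singleton _⟩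

theorem exists_edgeExponent_le_add_single_center (hG : ∀ i j, G.Adj i j → i ≠ c)
    (hF : F ≤ starGraph c)
    (h : ∀ i j, G.Adj i j → ∃ k l, F.Adj k l ∧ (i = k ∨ i = l ∨ j = k ∨ j = l)) :
    ∀ a ∈ edgeExponents G, ∃ b ∈ edgeExponents F, b ≤ a + single c 1 := by
  rintro _ ⟨i, j, hij, rfl⟩
  have hadj : F.Adj i c ∨ F.Adj j c := by
    obtain ⟨k, l, hkl, hshare⟩ := h i j hij
    have hcenter := (starGraph_adj.1 (hF hkl)).2
    grind [F.adj_comm k l, hG i j hij, hG j i hij.symm]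
  rcases hadj with hi | hj
  · exact ⟨_, ⟨i, c, hi, rfl⟩, by gcongr; exact le_self_add⟩
  · exact ⟨_, ⟨j, c, hj, rfl⟩, by gcongr; exact le_add_self⟩

end EdgeIdeal

/-- Construction of composite linear quotient orderings (Lemma `lem-tech`):
if each product `I_{G₀}^i I_{F₀}^j` (`i ≥ 1`, `i + j = s`) has linear quotients and every
edge of `G₀` meets an edge of `F₀`, then `I_{H₀}^s` has linear quotients, and a linear
quotient ordering of `I_{H₀}^s` is obtained by concatenating linear quotient orderings
`O_s, O_{s-1}, …, O_0` of the minimal generators of the summands. -/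
theorem composite_linear_quotient_ordering
    (K : Type*) [Field K] (n : ℕ) (hn : 1 ≤ n) (s : ℕ) (hs : 2 ≤ s)
    (G0 F0 : SimpleGraph (Fin n))
    -- `G0` is a graph on `[n-1]` : no edge of `G0` touches the vertex `n`
    (hG0 : ∀ i j : Fin n, G0.Adj i j → i.val < n - 1 ∧ j.val < n - 1)
    -- `F0` is a star on `[n]` with center `n` : every edge of `F0` contains the vertex `n`
    (hF0 : ∀ i j : Fin n, F0.Adj i j → i.val = n - 1 ∨ j.val = n - 1)
    -- (1) each `I_{G0}^i I_{F0}^j`, `i ≥ 1`, `i + j = s`, has linear quotients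
    (h1 : ∀ i j : ℕ, 1 ≤ i → i + j = s →
      HasLinearQuotients (edgeIdeal K G0 ^ i * edgeIdeal K F0 ^ j))
    -- (2) every edge of `G0` shares a vertex with some edge of `F0`
    (h2 : ∀ i j : Fin n, G0.Adj i j →
      ∃ k l : Fin n, F0.Adj k l ∧ (i = k ∨ i = l ∨ j = k ∨ j = l)) :
    HasLinearQuotients (edgeIdeal K (G0 ⊔ F0) ^ s) ∧
    ∀ O : ℕ → List (Fin n →₀ ℕ),
      -- `O j` is a linear quotient ordering of the minimal generators of
      -- `I_{G0}^{s-j} I_{F0}^j` for `0 ≤ j ≤ s - 1` …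
      (∀ j : ℕ, j ≤ s - 1 →
        (O j).Nodup ∧
        (∀ d, d ∈ O j ↔ IsMinGen (edgeIdeal K G0 ^ (s - j) * edgeIdeal K F0 ^ j) d) ∧
        IsLinQuotOrder K (O j)) →
      -- … and `O s` is a linear quotient ordering of the minimal generators of `I_{F0}^s`
      ((O s).Nodup ∧
        (∀ d, d ∈ O s ↔ IsMinGen (edgeIdeal K F0 ^ s) d) ∧
        IsLinQuotOrder K (O s)) →
      -- then the concatenation `(O_s, O_{s-1}, …, O_1, O_0)` is a linear quotient
      -- ordering of the minimal generators of `I_{H0}^s`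
      (((List.range (s + 1)).reverse.map O).flatten.Nodup ∧
        (∀ d, d ∈ ((List.range (s + 1)).reverse.map O).flatten ↔
          IsMinGen (edgeIdeal K (G0 ⊔ F0) ^ s) d) ∧
        IsLinQuotOrder K ((List.range (s + 1)).reverse.map O).flatten) := by
  let c : Fin n := ⟨n - 1, by omega⟩
  have hG : ∀ i j, G0.Adj i j → i ≠ c := fun i j hij => Fin.ne_of_val_ne (hG0 i j hij).1.ne
  have hF : F0 ≤ starGraph c := fun i j hij =>
    starGraph_adj.2 ⟨hij.ne, (hF0 i j hij).imp Fin.ext Fin.ext⟩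
  obtain ⟨hex, hconcat⟩ := composite_linear_quotient_ordering_general K
    (fun d => Or.rec (degree_of_mem_edgeExponents d) (degree_of_mem_edgeExponents d))
    (apply_eq_zero_of_mem_edgeExponents hG) (apply_center_of_mem_edgeExponents hF)
    (exists_edgeExponent_le_add_single_center hG hF h2) s
  simp only [← edgeIdeal_eq_monomialIdeal, ← edgeIdeal_sup] at hex hconcat
  refine ⟨hex fun j hj => ?_, fun O hO hOs => hconcat O fun j hj => ?_⟩
  · rcases hj.eq_or_lt with rfl | hlt
    · simpa using hasLinearQuotients_edgeIdeal_pow_of_le_starGraph K hF j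
    · exact h1 (s - j) j (by omega) (by omega)
  · rcases hj.eq_or_lt with rfl | hlt
    · simpa [IsLinQuotOrderOf] using hOs
    · exact hO j (by omega)

end
end

section
/- Fix n ≥ 6 and let H_n be the graph on [n] obtained from the anticycle on n vertices by removing the edges {n−2, n} and {1, n−1} and adding the edge {1, n}. Then I_{H_n}^2 has linear quotients. -/
open MvPolynomial

noncomputable section

/-!
List the exponents of the products of two edges by decreasing number of variables, and
lexicographically among those with equally many variables. Linear quotients amount to an exchange
property: if `N` precedes `M`, then some `x_v` occurring to a higher power in `x^N` than in `x^M`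
lies in the colon ideal of the generators preceding `M` by `x^M`.

In the complement of `H_n` the vertices `1, …, n - 1` form a cycle and `n` is glued to the edge
`{n - 2, n - 1}`, giving the triangle `T = {n - 2, n - 1, n}`. Since `T` is independent in `H_n`, no
generator contains all three of its variables; conversely every squarefree monomial of degree `4`
which does not contain them all is a generator, so that exchanges between squarefree monomials only
have to avoid `T`. For `x^M = x_a² x_b x_c`, replacing one `x_a` by a new variable `x_v` works
unless `T = {v, b, c}`; if no better `v` exists, `x^N` itself is an exchange of one variable in
`x^M`. For `x^M = x_a² x_b²` one needs a further variable of `x^N` at a neighbour of `a` or `b`. It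
exists because the complement of `H_n` has no induced `4`-cycle, its induced cycles having length
`3` and `n - 1 ≥ 5`.
-/

section LinearQuotients

variable {σ : Type*}

/-- The combinatorial condition behind linear quotients: some variable `x_v` occurring in `x^N` to
a higher power than in `x^M` lies in the colon ideal `(x^{M'} : M' ∈ S) : x^M`. -/
def IsExchangeable (S : Set (σ →₀ ℕ)) (M N : σ →₀ ℕ) : Prop :=
  ∃ v, M v < N v ∧ ∃ M' ∈ S, M' ≤ M + Finsupp.single v 1

theorem colon_span_monomial_eq_span_X (R : Type*) [CommRing R] {S : Set (σ →₀ ℕ)} {M : σ →₀ ℕ}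
    (hS : ∀ N ∈ S, IsExchangeable S M N) :
    Submodule.colon (Ideal.span ((fun d => monomial d (1 : R)) '' S))
        (Ideal.span {monomial M (1 : R)}) =
      Ideal.span (X '' {v | ∃ M' ∈ S, M' ≤ M + Finsupp.single v 1}) := by
  apply le_antisymm
  · intro f hf
    rw [Ideal.mem_colon_span_singleton, mem_ideal_span_monomial_image] at hf
    refine mem_ideal_span_X_image.2 fun u hu => ?_
    obtain ⟨N, hN, hNu⟩ := hf (u + M) (by
      rwa [mem_support_iff, coeff_mul_monomial, mul_one, ← mem_support_iff])
    obtain ⟨v, hv, hM'⟩ := hS N hN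
    have hle : N v ≤ u v + M v := hNu v
    exact ⟨v, hM', by omega⟩
  · rw [Ideal.span_le]
    rintro _ ⟨v, ⟨M', hM', hle⟩, rfl⟩
    rw [SetLike.mem_coe, Ideal.mem_colon_span_singleton, mem_ideal_span_monomial_image, X,
      monomial_mul, one_mul, add_comm]
    intro u hu
    rw [Finset.mem_singleton.1 (support_monomial_subset hu)]
    exact ⟨M', hM', hle⟩

variable {n : ℕ} (K : Type*) [Field K]

theorem isLinQuotOrder_of_isExchangeable {L : List (Fin n →₀ ℕ)}
    (hL : ∀ i k : Fin L.length, k < i →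
      IsExchangeable (L.get '' Set.Iio i) (L.get i) (L.get k)) :
    IsLinQuotOrder K L := by
  intro i _
  have himage : {m : MvPolynomial (Fin n) K |
        ∃ k : Fin L.length, k.val < i.val ∧ m = monomial (L.get k) 1} =
      (fun d => monomial d (1 : K)) '' (L.get '' Set.Iio i) := by
    rw [Set.image_image]
    exact Set.ext fun m => exists_congr fun k => and_congr_right fun _ => eq_comm
  rw [himage]
  exact ⟨_, colon_span_monomial_eq_span_X K (Set.forall_mem_image.2 fun k hk => hL i k hk)⟩

theorem isMinGen_span_monomial_iff {G : Set (Fin n →₀ ℕ)} (hG : IsAntichain (· ≤ ·) G)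
    {d : Fin n →₀ ℕ} :
    IsMinGen (Ideal.span ((fun d => monomial d (1 : K)) '' G)) d ↔ d ∈ G := by
  classical
  have hmem : ∀ d : Fin n →₀ ℕ,
      monomial d (1 : K) ∈ Ideal.span ((fun d => monomial d (1 : K)) '' G) ↔ ∃ e ∈ G, e ≤ d := by
    intro d
    rw [mem_ideal_span_monomial_image, support_monomial, if_neg one_ne_zero]
    simp only [Finset.mem_singleton, forall_eq]
  simp only [IsMinGen, hmem]
  constructor
  · rintro ⟨⟨e, he, hed⟩, hmin⟩
    by_cases hne : e = d
    · exact hne ▸ he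
    · exact absurd ⟨e, he, le_rfl⟩ (hmin e hed hne)
  · intro hd
    refine ⟨⟨d, hd, le_rfl⟩, ?_⟩
    rintro e hed hne ⟨f, hf, hfe⟩
    have hfd : f = d := hG.eq hf hd (hfe.trans hed)
    exact hne (le_antisymm hed (hfd ▸ hfe))

theorem hasLinearQuotients_of_isExchangeable {α : Type*} [LinearOrder α] {G : Set (Fin n →₀ ℕ)}
    (hfin : G.Finite) (hG : IsAntichain (· ≤ ·) G) {key : (Fin n →₀ ℕ) → α}
    (hkey : Function.Injective key)
    (hexch : ∀ M ∈ G, ∀ N ∈ G, key M < key N → IsExchangeable {M' ∈ G | key M < key M'} M N) :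
    HasLinearQuotients (Ideal.span ((fun d => monomial d (1 : K)) '' G)) := by
  classical
  let r : (Fin n →₀ ℕ) → (Fin n →₀ ℕ) → Prop := (⟨key, hkey⟩ : _ ↪ α) ⁻¹'o (· ≥ ·)
  have : IsLinearOrder (Fin n →₀ ℕ) r := (RelEmbedding.preimage ⟨key, hkey⟩ (· ≥ ·)).isLinearOrder
  let L := hfin.toFinset.sort r
  have hmem : ∀ d, d ∈ L ↔ d ∈ G := fun d => by simp [L]
  have hnodup : L.Nodup := Finset.sort_nodup _ _
  have hdec : ∀ k i : Fin L.length, k < i → key (L.get i) < key (L.get k) := fun k i hki =>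
    lt_of_le_of_ne (List.pairwise_iff_get.1 (Finset.pairwise_sort hfin.toFinset r) k i hki)
      (hkey.ne fun h => hki.ne' (List.nodup_iff_injective_get.1 hnodup h))
  refine Or.inr ⟨L, hnodup, fun d => by rw [hmem, isMinGen_span_monomial_iff K hG],
    isLinQuotOrder_of_isExchangeable K fun i k hki => ?_⟩
  obtain ⟨v, hv, M', ⟨hM', hlt⟩, hle⟩ := hexch _ ((hmem _).1 (L.get_mem i)) _
    ((hmem _).1 (L.get_mem k)) (hdec k i hki)
  obtain ⟨l, rfl⟩ := List.get_of_mem ((hmem _).2 hM')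
  refine ⟨v, hv, _, ⟨l, Set.mem_Iio.2 ?_, rfl⟩, hle⟩
  by_contra hil
  rcases (not_lt.1 hil).lt_or_eq with h | rfl
  · exact hlt.asymm (hdec _ _ h)
  · exact lt_irrefl _ hlt

end LinearQuotients

section Exponents

variable {σ : Type*}

theorem isAntichain_of_degree_eq {G : Set (σ →₀ ℕ)} {k : ℕ} (hG : ∀ d ∈ G, d.degree = k) :
    IsAntichain (· ≤ ·) G := by
  rintro d hd e he hne hle
  obtain ⟨f, rfl⟩ := le_iff_exists_add.1 hle
  have hdeg : d.degree + f.degree = d.degree := by rw [← map_add, hG _ hd, hG _ he]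
  have hf : f = 0 := (Finsupp.degree_eq_zero_iff f).1 (by omega)
  exact hne (by rw [hf, add_zero])

theorem eq_of_le_of_degree_eq {d e : σ →₀ ℕ} (hle : d ≤ e) (hdeg : d.degree = e.degree) : d = e :=
  (isAntichain_of_degree_eq (G := {d, e}) (k := e.degree) (by simp [hdeg])).eq
    (Set.mem_insert _ _) (Set.mem_insert_of_mem _ rfl) hle

theorem one_le_of_mem_support {M : σ →₀ ℕ} {v : σ} (hv : v ∈ M.support) : 1 ≤ M v :=
  Nat.one_le_iff_ne_zero.2 (Finsupp.mem_support_iff.1 hv)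

theorem card_support_le_degree (M : σ →₀ ℕ) : M.support.card ≤ M.degree := by
  rw [Finset.card_eq_sum_ones, Finsupp.degree_apply]
  exact Finset.sum_le_sum fun v => one_le_of_mem_support

theorem card_support_eq_degree_iff {M : σ →₀ ℕ} :
    M.support.card = M.degree ↔ ∀ v, M v ≤ 1 := by
  rw [Finset.card_eq_sum_ones, Finsupp.degree_apply,
    Finset.sum_eq_sum_iff_of_le fun v => one_le_of_mem_support]
  refine ⟨fun h v => ?_, fun h v hv => le_antisymm (one_le_of_mem_support hv) (h v)⟩
  by_cases hv : v ∈ M.support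
  · exact (h v hv).ge
  · simp [Finsupp.notMem_support_iff.1 hv]

theorem le_of_support_subset {M N : σ →₀ ℕ} (hM : ∀ v, M v ≤ 1)
    (h : M.support ⊆ N.support) : M ≤ N := by
  intro v
  by_cases hv : v ∈ M.support
  · exact (hM v).trans (one_le_of_mem_support (h hv))
  · simp [Finsupp.notMem_support_iff.1 hv]

end Exponents

section SquareOfEdgeIdeal

variable {V : Type*}

/-- The exponent vector of the quadratic monomial `x_a x_b`. -/
def edgeExponent (a b : V) : V →₀ ℕ :=
  Finsupp.single a 1 + Finsupp.single b 1

/-- The exponent vectors of the products of two edges of `H`, that is, of the minimal generators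
of the square of its edge ideal. -/
def squareExponents (H : SimpleGraph V) : Set (V →₀ ℕ) :=
  {M | ∃ a b c d, H.Adj a b ∧ H.Adj c d ∧ edgeExponent a b + edgeExponent c d = M}

theorem edgeExponent_comm (a b : V) : edgeExponent a b = edgeExponent b a :=
  add_comm _ _

theorem X_mul_X_eq_monomial_edgeExponent (R : Type*) [CommSemiring R] (a b : V) :
    (X a * X b : MvPolynomial V R) = monomial (edgeExponent a b) 1 := by
  simp only [X, monomial_mul, mul_one, edgeExponent]

theorem degree_edgeExponent_add (a b c d : V) :
    (edgeExponent a b + edgeExponent c d).degree = 4 := by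
  simp only [edgeExponent, map_add, Finsupp.degree_single]

theorem degree_of_mem_squareExponents {H : SimpleGraph V} {M : V →₀ ℕ}
    (hM : M ∈ squareExponents H) : M.degree = 4 := by
  obtain ⟨a, b, c, d, -, -, rfl⟩ := hM
  exact degree_edgeExponent_add a b c d

theorem support_edgeExponent_add [DecidableEq V] (a b c d : V) :
    (edgeExponent a b + edgeExponent c d).support = {a, b, c, d} := by
  ext v
  simp [edgeExponent, Finsupp.single_apply, imp_iff_not_or, or_assoc, eq_comm]

theorem support_edgeExponent_add_edgeExponent_left [DecidableEq V] (a b c : V) :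
    (edgeExponent a b + edgeExponent a c).support = {a, b, c} := by
  rw [support_edgeExponent_add]
  grind

theorem ne_of_three_le_card_support {a b c : V}
    (h : 3 ≤ (edgeExponent a b + edgeExponent a c).support.card) : b ≠ c := by
  classical
  rintro rfl
  rw [support_edgeExponent_add_edgeExponent_left, Finset.pair_eq_singleton] at h
  exact absurd (h.trans Finset.card_le_two) (by decide)

theorem edgeIdeal_sq (K : Type*) [Field K] {n : ℕ} (H : SimpleGraph (Fin n)) :
    edgeIdeal K H ^ 2 = Ideal.span ((fun d => monomial d (1 : K)) '' squareExponents H) := by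
  rw [pow_two, edgeIdeal, Ideal.span_mul_span']
  congr 1
  ext p
  constructor
  · rintro ⟨_, ⟨a, b, hab, rfl⟩, _, ⟨c, d, hcd, rfl⟩, rfl⟩
    exact ⟨_, ⟨a, b, c, d, hab, hcd, rfl⟩, by
      simp only [X_mul_X_eq_monomial_edgeExponent, monomial_mul, mul_one]⟩
  · rintro ⟨_, ⟨a, b, c, d, hab, hcd, rfl⟩, rfl⟩
    exact ⟨_, ⟨a, b, hab, rfl⟩, _, ⟨c, d, hcd, rfl⟩, by
      simp only [X_mul_X_eq_monomial_edgeExponent, monomial_mul, mul_one]⟩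

theorem squarefree_or_eq_of_mem_squareExponents {H : SimpleGraph V} {M : V →₀ ℕ}
    (hM : M ∈ squareExponents H) :
    (∀ v, M v ≤ 1) ∨
      ∃ a b c, H.Adj a b ∧ H.Adj a c ∧ M = edgeExponent a b + edgeExponent a c := by
  classical
  obtain ⟨a, b, c, d, hab, hcd, rfl⟩ := hM
  by_cases hac : a = c
  · exact Or.inr ⟨a, b, d, hab, hac ▸ hcd, by rw [hac]⟩
  by_cases had : a = d
  · exact Or.inr ⟨a, b, c, hab, had ▸ hcd.symm, by rw [edgeExponent_comm c, had]⟩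
  by_cases hbc : b = c
  · exact Or.inr ⟨b, a, d, hab.symm, hbc ▸ hcd, by rw [edgeExponent_comm a, hbc]⟩
  by_cases hbd : b = d
  · exact Or.inr ⟨b, a, c, hab.symm, hbd ▸ hcd.symm, by
      rw [edgeExponent_comm a, edgeExponent_comm c, hbd]⟩
  left
  intro v
  have := hab.ne
  have := hcd.ne
  simp only [edgeExponent, Finsupp.add_apply, Finsupp.single_apply]
  grind

end SquareOfEdgeIdeal

section Graph

variable {V : Type*} {H : SimpleGraph V} {T : Finset V} {M : V →₀ ℕ}

/-- `H` is gap-free: no two disjoint edges of `H` form an induced subgraph, equivalently the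
complement of `H` has no induced `4`-cycle. -/
def IsGapFree (H : SimpleGraph V) : Prop :=
  ∀ a b c d, H.Adj a b → H.Adj c d → a ≠ c → a ≠ d → b ≠ c → b ≠ d →
    H.Adj a c ∨ H.Adj a d ∨ H.Adj b c ∨ H.Adj b d

theorem edgeExponent_eq_of_isGapFree {a b x y : V} (hgap : IsGapFree H) (hab : H.Adj a b)
    (hxy : H.Adj x y) (hax : H.Adj a x → x = b) (hay : H.Adj a y → y = b)
    (hbx : H.Adj b x → x = a) (hby : H.Adj b y → y = a) :
    edgeExponent x y = edgeExponent a b := by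
  have hmeet : x = a ∨ x = b ∨ y = a ∨ y = b := by
    have := hgap a b x y hab hxy
    grind
  rcases hmeet with rfl | rfl | rfl | rfl
  · rw [hay hxy]
  · rw [hby hxy, edgeExponent_comm]
  · rw [hax hxy.symm, edgeExponent_comm]
  · rw [hbx hxy.symm]

theorem not_subset_support_of_mem_squareExponents (hindep : H.IsIndepSet T) (hT : 3 ≤ T.card)
    (hM : M ∈ squareExponents H) : ¬ T ⊆ M.support := by
  classical
  obtain ⟨a, b, c, d, hab, hcd, rfl⟩ := hM
  rw [support_edgeExponent_add]
  intro hsub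
  have hle : ∀ x y, H.Adj x y → (T ∩ {x, y}).card ≤ 1 := fun x y hxy =>
    Finset.card_le_one.2 fun u hu v hv => by
      by_contra huv
      have hnadj := hindep (Finset.mem_inter.1 hu).1 (Finset.mem_inter.1 hv).1 huv
      have := hxy.symm
      grind
  have hunion : T = (T ∩ {a, b}) ∪ (T ∩ {c, d}) := by grind
  have hcard := Finset.card_union_le (T ∩ {a, b}) (T ∩ {c, d})
  rw [← hunion] at hcard
  have hab1 := hle a b hab
  have hcd1 := hle c d hcd
  omega

variable [DecidableEq V]

/-- `A` consists of the ends of two edges of `H`; for `A` of size `4` this says that the induced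
subgraph on `A` has a perfect matching. -/
def IsCoveredByTwoEdges (H : SimpleGraph V) (A : Finset V) : Prop :=
  ∃ a b c d, H.Adj a b ∧ H.Adj c d ∧ A = {a, b, c, d}

theorem mem_squareExponents_of_squarefree
    (hmatch : ∀ A : Finset V, A.card = 4 → ¬ T ⊆ A → IsCoveredByTwoEdges H A)
    (hM : ∀ v, M v ≤ 1) (hdeg : M.degree = 4) (hT : ¬ T ⊆ M.support) :
    M ∈ squareExponents H := by
  have hcard : M.support.card = 4 := (card_support_eq_degree_iff.2 hM).trans hdeg
  obtain ⟨a, b, c, d, hab, hcd, hA⟩ := hmatch _ hcard hT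
  refine ⟨a, b, c, d, hab, hcd, ?_⟩
  rw [← support_edgeExponent_add] at hA
  refine (eq_of_le_of_degree_eq (le_of_support_subset hM hA.le) ?_).symm
  rw [hdeg, degree_edgeExponent_add]

theorem eq_of_subset_of_adj {a b c v : V} (hindep : H.IsIndepSet T) (hT : 3 ≤ T.card)
    (hab : H.Adj a b) (hac : H.Adj a c) (hsub : T ⊆ {v, a, b, c}) : T = {v, b, c} := by
  have haT : a ∉ T := by
    intro haT
    have hbT : b ∉ T := fun hbT => hindep haT hbT hab.ne hab
    have hcT : c ∉ T := fun hcT => hindep haT hcT hac.ne hac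
    have hle : T.card ≤ 2 := (Finset.card_le_card (t := {v, a}) (by grind)).trans
      Finset.card_le_two
    omega
  exact Finset.eq_of_subset_of_card_le (by grind) (Finset.card_le_three.trans hT)

theorem exists_edgeExponent_eq_of_support_subset_insert {a : V} (hindep : H.IsIndepSet T)
    (hM : M ∈ squareExponents H) (hsub : M.support ⊆ insert a T) :
    ∃ t ∈ T, ∃ u ∈ T, M = edgeExponent a t + edgeExponent a u := by
  have hedge : ∀ x ∈ M.support, ∀ y ∈ M.support, H.Adj x y →
      ∃ t ∈ T, edgeExponent x y = edgeExponent a t := by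
    intro x hx y hy hxy
    have hne := hxy.ne
    by_cases hxa : x = a
    · exact ⟨y, by grind, by rw [hxa]⟩
    · refine ⟨x, by grind, ?_⟩
      have hya : y = a := by
        by_contra hya
        exact hindep (by grind) (by grind) hne hxy
      rw [hya, edgeExponent_comm]
  obtain ⟨p, q, r, s, hpq, hrs, rfl⟩ := hM
  rw [support_edgeExponent_add] at hedge
  obtain ⟨t, ht, hpqt⟩ := hedge p (by simp) q (by simp) hpq
  obtain ⟨u, hu, hrsu⟩ := hedge r (by simp) s (by simp) hrs
  exact ⟨t, ht, u, hu, by rw [hpqt, hrsu]⟩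

theorem exists_not_subset_insert_erase {A B : Finset V} {v : V} (hTB : ¬ T ⊆ B) (hAB : ¬ A ⊆ B)
    (hv : v ∈ B) : ∃ w ∈ A, w ∉ B ∧ ¬ T ⊆ insert v (A.erase w) := by
  by_cases hT : T ⊆ insert v A
  · obtain ⟨t, htT, htB⟩ := Finset.not_subset.1 hTB
    exact ⟨t, by grind, htB, fun h => by grind⟩
  · obtain ⟨w, hwA, hwB⟩ := Finset.not_subset.1 hAB
    exact ⟨w, hwA, hwB, fun h => hT (h.trans (Finset.insert_subset_insert v (A.erase_subset w)))⟩

end Graph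

section Rank

variable {V : Type*} {M N P : V →₀ ℕ}

/-- The generators of the square are listed by decreasing `rank`: those with more variables first,
and among those with equally many, decreasingly in the lexicographic order in which a larger vertex
gives a larger variable. -/
def rank (M : V →₀ ℕ) : ℕ ×ₗ Colex (V →₀ ℕ) :=
  toLex (M.support.card, toColex M)

theorem rank_injective : Function.Injective (rank : (V →₀ ℕ) → _) := fun _ _ h =>
  toColex_inj.1 (Prod.ext_iff.1 (toLex_inj.1 h)).2

variable [LinearOrder V]

/-- The generators of the square of the edge ideal of `H` listed before `M`. -/
abbrev precedingExponents (H : SimpleGraph V) (M : V →₀ ℕ) : Set (V →₀ ℕ) :=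
  {M' ∈ squareExponents H | rank M < rank M'}

theorem rank_lt_of_card_support_lt (h : M.support.card < N.support.card) : rank M < rank N :=
  Prod.Lex.toLex_lt_toLex.2 (Or.inl h)

theorem card_support_le_of_rank_lt (h : rank M < rank N) : M.support.card ≤ N.support.card :=
  (Prod.Lex.toLex_lt_toLex.1 h).elim le_of_lt fun h => h.1.le

theorem rank_lt_rank_of_swap {v w : V} (hwv : w < v) (hw : P w = 0) (hv : P v = 0) :
    rank (Finsupp.single w 1 + P) < rank (Finsupp.single v 1 + P) := by
  have hcard : ∀ x, P x = 0 → (Finsupp.single x 1 + P).support.card = P.support.card + 1 := by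
    intro x hx
    rw [Finsupp.support_add_eq (by simp [hx]), Finsupp.support_single _ one_ne_zero,
      Finset.singleton_union,
      Finset.card_insert_of_notMem (Finsupp.notMem_support_iff.2 hx)]
  refine Prod.Lex.toLex_lt_toLex.2 (Or.inr ⟨(hcard w hw).trans (hcard v hv).symm, ?_⟩)
  exact add_lt_add_left (Finsupp.Colex.single_lt_iff.2 hwv) (toColex P)

end Rank

section Exchange

variable {V : Type*} [LinearOrder V] {H : SimpleGraph V} {T : Finset V} {M N P : V →₀ ℕ}

theorem isExchangeable_of_swap
    (hmatch : ∀ A : Finset V, A.card = 4 → ¬ T ⊆ A → IsCoveredByTwoEdges H A) {v w : V}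
    (hMP : M = Finsupp.single w 1 + P) (hdeg : M.degree = 4) (hsq : ∀ x, M x ≤ 1) (hwv : w < v)
    (hvM : M v = 0) (hvN : M v < N v) (hT : ¬ T ⊆ insert v (M.support.erase w)) :
    IsExchangeable (precedingExponents H M) M N := by
  subst hMP
  have hPv : P v = 0 := by
    rw [Finsupp.add_apply] at hvM
    omega
  have hPw : P w = 0 := by
    have := hsq w
    rw [Finsupp.add_apply, Finsupp.single_eq_same] at this
    omega
  refine ⟨v, hvN, Finsupp.single v 1 + P, ⟨?_, rank_lt_rank_of_swap hwv hPw hPv⟩, ?_⟩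
  · refine mem_squareExponents_of_squarefree hmatch (fun x => ?_) ?_ fun h => hT (h.trans ?_)
    · have := hsq x
      simp only [Finsupp.add_apply, Finsupp.single_apply] at this ⊢
      grind
    · simpa only [map_add, Finsupp.degree_single] using hdeg
    · intro x
      simp only [Finsupp.mem_support_iff, Finset.mem_insert, Finset.mem_erase, Finsupp.add_apply,
        Finsupp.single_apply]
      grind
  · rw [add_assoc, add_comm P]
    exact le_add_self

theorem isExchangeable_of_squarefree (hindep : H.IsIndepSet T) (hT : 3 ≤ T.card)
    (hmatch : ∀ A : Finset V, A.card = 4 → ¬ T ⊆ A → IsCoveredByTwoEdges H A)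
    (hM : M ∈ squareExponents H) (hN : N ∈ squareExponents H) (hlt : rank M < rank N)
    (hsqM : ∀ v, M v ≤ 1) : IsExchangeable (precedingExponents H M) M N := by
  have hMdeg := degree_of_mem_squareExponents hM
  have hNdeg := degree_of_mem_squareExponents hN
  have hcard : M.support.card = N.support.card := (card_support_le_of_rank_lt hlt).antisymm <| by
    rw [card_support_eq_degree_iff.2 hsqM, hMdeg, ← hNdeg]
    exact card_support_le_degree N
  have hsqN : ∀ v, N v ≤ 1 := card_support_eq_degree_iff.1 <| by
    rw [← hcard, card_support_eq_degree_iff.2 hsqM, hMdeg, hNdeg]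
  have hcolex : toColex M < toColex N :=
    ((Prod.Lex.toLex_lt_toLex.1 hlt).resolve_left hcard.not_lt).2
  obtain ⟨v, hagree, hv⟩ := Finsupp.Colex.lt_iff.1 hcolex
  simp only [ofColex_toColex] at hagree hv
  have hMN : ¬ M.support ⊆ N.support := fun h => hcolex.ne <| congrArg toColex <|
    eq_of_le_of_degree_eq (le_of_support_subset hsqM h) (hMdeg.trans hNdeg.symm)
  obtain ⟨w, hwM, hwN, hTw⟩ := exists_not_subset_insert_erase
    (not_subset_support_of_mem_squareExponents hindep hT hN) hMN
    (Finsupp.mem_support_iff.2 (Nat.ne_zero_of_lt hv))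
  rw [Finsupp.notMem_support_iff] at hwN
  have hw1 : 1 ≤ M w := one_le_of_mem_support hwM
  have hwv : w < v := by
    by_contra! hvw
    rcases hvw.lt_or_eq with h | rfl
    · exact absurd (hagree w h) (by omega)
    · omega
  have hvM : M v = 0 := by have := hsqN v; omega
  obtain ⟨P, hMP⟩ := le_iff_exists_add.1 (Finsupp.single_le_iff.2 hw1)
  exact isExchangeable_of_swap hmatch hMP hMdeg hsqM hwv hvM hv hTw

theorem isExchangeable_of_new_variable {a b c v : V}
    (hmatch : ∀ A : Finset V, A.card = 4 → ¬ T ⊆ A → IsCoveredByTwoEdges H A)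
    (hab : a ≠ b) (hac : a ≠ c) (hbc : b ≠ c) (hvN : v ∈ N.support)
    (hv : v ∉ ({a, b, c} : Finset V)) (hT : ¬ T ⊆ {v, a, b, c}) :
    IsExchangeable (precedingExponents H (edgeExponent a b + edgeExponent a c))
      (edgeExponent a b + edgeExponent a c) N := by
  have hsupp : (edgeExponent a v + edgeExponent b c).support = {v, a, b, c} := by
    rw [support_edgeExponent_add, Finset.insert_comm]
  have hcard : ({v, a, b, c} : Finset V).card = 4 := by
    rw [Finset.card_insert_of_notMem hv, Finset.card_eq_three.2 ⟨a, b, c, hab, hac, hbc, rfl⟩]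
  have hdeg := degree_edgeExponent_add a v b c
  have hN := one_le_of_mem_support hvN
  refine ⟨v, ?_, edgeExponent a v + edgeExponent b c,
    ⟨mem_squareExponents_of_squarefree hmatch ?_ hdeg (hsupp ▸ hT), ?_⟩, ?_⟩
  · have hvM : v ∉ (edgeExponent a b + edgeExponent a c).support := by
      rw [support_edgeExponent_add]
      grind
    rwa [Finsupp.notMem_support_iff.1 hvM]
  · rw [← card_support_eq_degree_iff, hsupp, hcard, hdeg]
  · apply rank_lt_of_card_support_lt
    rw [hsupp, hcard, support_edgeExponent_add_edgeExponent_left]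
    exact Nat.lt_succ_of_le Finset.card_le_three
  · have : edgeExponent a b + edgeExponent a c + Finsupp.single v 1 =
        edgeExponent a v + edgeExponent b c + Finsupp.single a 1 := by
      simp only [edgeExponent]
      abel
    exact this ▸ le_self_add

theorem isExchangeable_of_support_subset {a b c : V} (hN : N ∈ squareExponents H)
    (hlt : rank (edgeExponent a b + edgeExponent a c) < rank N) (hcard : 3 ≤ N.support.card)
    (hsub : N.support ⊆ {a, b, c}) :
    IsExchangeable (precedingExponents H (edgeExponent a b + edgeExponent a c))
      (edgeExponent a b + edgeExponent a c) N := by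
  rcases squarefree_or_eq_of_mem_squareExponents hN with hsq | ⟨p, q, r, hpq, hpr, hNeq⟩
  · have hcard4 := (card_support_eq_degree_iff.2 hsq).trans (degree_of_mem_squareExponents hN)
    have hle := (Finset.card_le_card hsub).trans Finset.card_le_three
    omega
  have hNsupp : N.support = {p, q, r} := hNeq ▸ support_edgeExponent_add_edgeExponent_left p q r
  have hqr : q ≠ r := ne_of_three_le_card_support (hNeq ▸ hcard)
  have hp : p ∈ ({a, b, c} : Finset V) := hsub (by simp [hNsupp])
  have hq : q ∈ ({a, b, c} : Finset V) := hsub (by simp [hNsupp])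
  have hr : r ∈ ({a, b, c} : Finset V) := hsub (by simp [hNsupp])
  have hpq := hpq.ne
  have hpr := hpr.ne
  simp only [Finset.mem_insert, Finset.mem_singleton] at hp hq hr
  have hpa : p ≠ a := by
    rintro rfl
    refine hlt.ne (congrArg rank ?_)
    obtain ⟨rfl, rfl⟩ | ⟨rfl, rfl⟩ : q = b ∧ r = c ∨ q = c ∧ r = b := by grind
    · exact hNeq.symm
    · rw [hNeq, add_comm]
  -- Only the square variable of `x^N` is new to `x^M`, so `x^N` divides `x^M x_p`.
  refine ⟨p, ?_, N, ⟨hN, hlt⟩, fun x => ?_⟩ <;>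
  · simp only [hNeq, edgeExponent, Finsupp.add_apply, Finsupp.single_apply]
    grind

theorem isExchangeable_of_subset_insert {a b c v : V} (hindep : H.IsIndepSet T)
    (hTeq : T = {v, b, c}) (hv : v ∉ ({a, b, c} : Finset V)) (hN : N ∈ squareExponents H)
    (hlt : rank (edgeExponent a b + edgeExponent a c) < rank N) (hcard : 3 ≤ N.support.card)
    (hvN : v ∈ N.support) (hsub : N.support ⊆ insert a T) :
    IsExchangeable (precedingExponents H (edgeExponent a b + edgeExponent a c))
      (edgeExponent a b + edgeExponent a c) N := by
  obtain ⟨t, ht, u, hu, hNeq⟩ := exists_edgeExponent_eq_of_support_subset_insert hindep hN hsub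
  have hNsupp : N.support = {a, t, u} := hNeq ▸ support_edgeExponent_add_edgeExponent_left a t u
  have htu : t ≠ u := ne_of_three_le_card_support (hNeq ▸ hcard)
  rw [hTeq] at ht hu
  rw [hNsupp] at hvN
  simp only [Finset.mem_insert, Finset.mem_singleton, not_or] at ht hu hv hvN
  -- `x^N` is `x_a² x_v x_b` or `x_a² x_v x_c`, and either of them divides `x^M x_v`.
  refine ⟨v, ?_, N, ⟨hN, hlt⟩, fun x => ?_⟩ <;>
  · simp only [hNeq, edgeExponent, Finsupp.add_apply, Finsupp.single_apply]
    grind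

theorem isExchangeable_of_three_variables {a b c : V} (hindep : H.IsIndepSet T) (hT : 3 ≤ T.card)
    (hmatch : ∀ A : Finset V, A.card = 4 → ¬ T ⊆ A → IsCoveredByTwoEdges H A)
    (hab : H.Adj a b) (hac : H.Adj a c) (hbc : b ≠ c) (hN : N ∈ squareExponents H)
    (hlt : rank (edgeExponent a b + edgeExponent a c) < rank N) :
    IsExchangeable (precedingExponents H (edgeExponent a b + edgeExponent a c))
      (edgeExponent a b + edgeExponent a c) N := by
  have hcard : 3 ≤ N.support.card := by
    have hle := card_support_le_of_rank_lt hlt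
    rwa [support_edgeExponent_add_edgeExponent_left,
      Finset.card_eq_three.2 ⟨a, b, c, hab.ne, hac.ne, hbc, rfl⟩] at hle
  by_cases hnew : ∃ v ∈ N.support, v ∉ ({a, b, c} : Finset V) ∧ ¬ T ⊆ {v, a, b, c}
  · obtain ⟨v, hvN, hv, hTv⟩ := hnew
    exact isExchangeable_of_new_variable hmatch hab.ne hac.ne hbc hvN hv hTv
  push Not at hnew
  by_cases hsub : N.support ⊆ {a, b, c}
  · exact isExchangeable_of_support_subset hN hlt hcard hsub
  obtain ⟨v, hvN, hv⟩ := Finset.not_subset.1 hsub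
  have hTeq : ∀ u ∈ N.support, u ∉ ({a, b, c} : Finset V) → T = {u, b, c} := fun u huN hu =>
    eq_of_subset_of_adj hindep hT hab hac (hnew u huN hu)
  have hTv := hTeq v hvN hv
  refine isExchangeable_of_subset_insert hindep hTv hv hN hlt hcard hvN fun u hu => ?_
  by_cases huabc : u ∈ ({a, b, c} : Finset V)
  · grind
  · simp [hTeq u hu huabc]

theorem isExchangeable_add_self_of_adj {a b v : V} (hab : H.Adj a b) (hav : H.Adj a v) (hvb : v ≠ b)
    (hvN : v ∈ N.support) :
    IsExchangeable (precedingExponents H (edgeExponent a b + edgeExponent a b))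
      (edgeExponent a b + edgeExponent a b) N := by
  have hN := one_le_of_mem_support hvN
  have hva := hav.ne'
  refine ⟨v, ?_, edgeExponent a b + edgeExponent a v, ⟨⟨a, b, a, v, hab, hav, rfl⟩, ?_⟩, ?_⟩
  · have hvM : v ∉ (edgeExponent a b + edgeExponent a b).support := by
      rw [support_edgeExponent_add]
      grind
    rwa [Finsupp.notMem_support_iff.1 hvM]
  · apply rank_lt_of_card_support_lt
    rw [support_edgeExponent_add_edgeExponent_left, support_edgeExponent_add_edgeExponent_left,
      Finset.card_eq_three.2 ⟨a, b, v, hab.ne, hav.ne, hvb.symm, rfl⟩, Finset.pair_eq_singleton]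
    exact Nat.lt_succ_of_le Finset.card_le_two
  · have : edgeExponent a b + edgeExponent a b + Finsupp.single v 1 =
        edgeExponent a b + edgeExponent a v + Finsupp.single b 1 := by
      simp only [edgeExponent]
      abel
    exact this ▸ le_self_add

theorem isExchangeable_add_self_of_isGapFree {a b : V} (hgap : IsGapFree H) (hab : H.Adj a b)
    (hN : N ∈ squareExponents H) (hne : N ≠ edgeExponent a b + edgeExponent a b) :
    IsExchangeable (precedingExponents H (edgeExponent a b + edgeExponent a b))
      (edgeExponent a b + edgeExponent a b) N := by
  by_cases hav : ∃ v ∈ N.support, H.Adj a v ∧ v ≠ b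
  · obtain ⟨v, hvN, hadj, hvb⟩ := hav
    exact isExchangeable_add_self_of_adj hab hadj hvb hvN
  by_cases hbv : ∃ v ∈ N.support, H.Adj b v ∧ v ≠ a
  · obtain ⟨v, hvN, hadj, hva⟩ := hbv
    rw [edgeExponent_comm a b]
    exact isExchangeable_add_self_of_adj hab.symm hadj hva hvN
  push Not at hav hbv
  have hedge : ∀ x ∈ N.support, ∀ y ∈ N.support, H.Adj x y →
      edgeExponent x y = edgeExponent a b := fun x hx y hy hxy =>
    edgeExponent_eq_of_isGapFree hgap hab hxy (hav x hx) (hav y hy) (hbv x hx) (hbv y hy)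
  obtain ⟨p, q, r, s, hpq, hrs, rfl⟩ := hN
  rw [support_edgeExponent_add] at hedge
  rw [hedge p (by simp) q (by simp) hpq, hedge r (by simp) s (by simp) hrs] at hne
  exact absurd rfl hne

theorem isExchangeable_of_rank_lt (hgap : IsGapFree H) (hindep : H.IsIndepSet T) (hT : 3 ≤ T.card)
    (hmatch : ∀ A : Finset V, A.card = 4 → ¬ T ⊆ A → IsCoveredByTwoEdges H A)
    (hM : M ∈ squareExponents H) (hN : N ∈ squareExponents H) (hlt : rank M < rank N) :
    IsExchangeable (precedingExponents H M) M N := by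
  rcases squarefree_or_eq_of_mem_squareExponents hM with hsq | ⟨a, b, c, hab, hac, rfl⟩
  · exact isExchangeable_of_squarefree hindep hT hmatch hM hN hlt hsq
  by_cases hbc : b = c
  · subst hbc
    exact isExchangeable_add_self_of_isGapFree hgap hab hN fun h => hlt.ne (congrArg rank h.symm)
  · exact isExchangeable_of_three_variables hindep hT hmatch hab hac hbc hN hlt

end Exchange

theorem hasLinearQuotients_edgeIdeal_sq (K : Type*) [Field K] {n : ℕ} {H : SimpleGraph (Fin n)}
    {T : Finset (Fin n)} (hgap : IsGapFree H) (hindep : H.IsIndepSet T) (hT : 3 ≤ T.card)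
    (hmatch : ∀ A : Finset (Fin n), A.card = 4 → ¬ T ⊆ A → IsCoveredByTwoEdges H A) :
    HasLinearQuotients (edgeIdeal K H ^ 2) := by
  have hdeg : ∀ M ∈ squareExponents H, M.degree = 4 := fun M => degree_of_mem_squareExponents
  rw [edgeIdeal_sq]
  exact hasLinearQuotients_of_isExchangeable K ((Finsupp.finite_of_degree_eq 4).subset hdeg)
    (isAntichain_of_degree_eq hdeg) rank_injective
    fun M hM N hN => isExchangeable_of_rank_lt hgap hindep hT hmatch hM hN

theorem exists_lt_lt_lt_of_card_eq_four {α : Type*} [LinearOrder α] {A : Finset α}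
    (hA : A.card = 4) : ∃ x y z t, x < y ∧ y < z ∧ z < t ∧ A = {x, y, z, t} := by
  refine ⟨A.orderEmbOfFin hA 0, A.orderEmbOfFin hA 1, A.orderEmbOfFin hA 2,
    A.orderEmbOfFin hA 3, by simp, by simp, by simp, ?_⟩
  refine (A.image_orderEmbOfFin_univ hA).symm.trans (Finset.ext fun v => ?_)
  simp [-Finset.image_orderEmbOfFin_univ, Fin.exists_fin_succ, eq_comm]

section GraphH

/-- The graph `H_n`, its vertex set `[n]` being shifted to `{0, …, n - 1}`. In its complement, the
vertices `0, …, n - 2` form a cycle and `n - 1` is joined to the adjacent vertices `n - 3` and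
`n - 2` only. -/
def graphH (n : ℕ) : SimpleGraph (Fin n) :=
  SimpleGraph.fromRel fun i j =>
    i.val + 1 < j.val ∧ ¬ (i.val = 0 ∧ j.val = n - 2) ∧ ¬ (i.val = n - 3 ∧ j.val = n - 1)

variable {n : ℕ}

theorem graphH_adj {i j : Fin n} : (graphH n).Adj i j ↔
    (i.val + 1 < j.val ∧ ¬ (i.val = 0 ∧ j.val = n - 2) ∧ ¬ (i.val = n - 3 ∧ j.val = n - 1)) ∨
      (j.val + 1 < i.val ∧ ¬ (j.val = 0 ∧ i.val = n - 2) ∧ ¬ (j.val = n - 3 ∧ i.val = n - 1)) := by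
  rw [graphH, SimpleGraph.fromRel_adj, and_iff_right_of_imp]
  rintro (h | h) rfl <;> exact absurd h.1 (Nat.lt_irrefl _ ∘ Nat.lt_of_succ_lt)

theorem anticycle_adj_of_lt {i j : Fin n} (hij : i < j) :
    (anticycle n).Adj i j ↔ i.val + 1 < j.val ∧ ¬ (i.val = 0 ∧ j.val = n - 1) := by
  have hi : (i.val + 1) % n = i.val + 1 := Nat.mod_eq_of_lt (by omega)
  have hj : (j.val + 1) % n = if j.val = n - 1 then 0 else j.val + 1 := by
    split_ifs with h
    · rw [h, Nat.sub_add_cancel i.pos, Nat.mod_self]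
    · exact Nat.mod_eq_of_lt (by omega)
  simp only [anticycle, hi, hj, Ne, Fin.ext_iff]
  split_ifs <;> omega

theorem graphH_eq (hn : 4 ≤ n) :
    (anticycle n).deleteEdges
        {s(⟨n - 3, by omega⟩, ⟨n - 1, by omega⟩), s(⟨0, by omega⟩, ⟨n - 2, by omega⟩)} ⊔
      SimpleGraph.fromEdgeSet {s(⟨0, by omega⟩, ⟨n - 1, by omega⟩)} = graphH n := by
  ext i j
  wlog hij : i < j generalizing i j
  · rcases eq_or_lt_of_not_gt hij with rfl | hji
    · simp only [SimpleGraph.irrefl]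
    · rw [SimpleGraph.adj_comm, this j i hji, SimpleGraph.adj_comm]
  simp only [SimpleGraph.sup_adj, SimpleGraph.deleteEdges_adj, anticycle_adj_of_lt hij,
    SimpleGraph.fromEdgeSet_adj, Set.mem_insert_iff, Set.mem_singleton_iff, Sym2.eq_iff,
    Fin.ext_iff, graphH_adj, Ne]
  omega

theorem isGapFree_graphH (hn : 6 ≤ n) : IsGapFree (graphH n) := by
  intro a b c d hab hcd hac had hbc hbd
  simp only [graphH_adj, Ne, Fin.ext_iff] at *
  omega

/-- The vertices `n - 2`, `n - 1`, `n` of `[n]`, which form a triangle in the complement of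
`H_n`. -/
def lastThree (n : ℕ) : Finset (Fin n) :=
  {i | n ≤ i.val + 3}

theorem mem_lastThree {i : Fin n} : i ∈ lastThree n ↔ n ≤ i.val + 3 := by
  simp only [lastThree, Finset.mem_filter_univ]

theorem card_lastThree (hn : 3 ≤ n) : (lastThree n).card = 3 := by
  have hIci : lastThree n = Finset.Ici ⟨n - 3, by omega⟩ := by
    ext i
    rw [mem_lastThree, Finset.mem_Ici, Fin.le_def, Nat.sub_le_iff_le_add]
  rw [hIci, Fin.card_Ici, Nat.sub_sub_self hn]

theorem isIndepSet_lastThree : (graphH n).IsIndepSet (lastThree n) := by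
  intro i hi j hj _ hij
  rw [Finset.mem_coe, mem_lastThree] at hi hj
  rw [graphH_adj] at hij
  omega

theorem isCoveredByTwoEdges_graphH {A : Finset (Fin n)} (hA : A.card = 4)
    (hT : ¬ lastThree n ⊆ A) : IsCoveredByTwoEdges (graphH n) A := by
  obtain ⟨x, y, z, t, hxy, hyz, hzt, rfl⟩ := exists_lt_lt_lt_of_card_eq_four hA
  have hy : y.val + 3 < n := by
    by_contra! hy
    refine hT fun i hi => ?_
    rw [mem_lastThree] at hi
    simp only [Finset.mem_insert, Finset.mem_singleton, Fin.ext_iff]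
    omega
  have hyt : (graphH n).Adj y t := by
    rw [graphH_adj]
    omega
  by_cases hxz : x.val = 0 ∧ z.val = n - 2
  · have hxt : (graphH n).Adj x t := by
      rw [graphH_adj]
      omega
    have hyz : (graphH n).Adj y z := by
      rw [graphH_adj]
      omega
    exact ⟨x, t, y, z, hxt, hyz, by grind⟩
  · have hxz : (graphH n).Adj x z := by
      rw [graphH_adj]
      omega
    exact ⟨x, z, y, t, hxz, hyt, by grind⟩

end GraphH

/-- Corollary `cor2`: for `n ≥ 6`, the graph `H_n` obtained from the anticycle on `[n]`
by removing the edges `{n-2, n}` and `{1, n-1}` and adding the edge `{1, n}` has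
`I_{H_n}^2` with linear quotients. -/
theorem Hn_square_linear_quotients
    (K : Type*) [Field K] (n : ℕ) (hn : 6 ≤ n) :
    HasLinearQuotients
      ((edgeIdeal K
        (((anticycle n).deleteEdges
            {s(⟨n - 3, by omega⟩, ⟨n - 1, by omega⟩), s(⟨0, by omega⟩, ⟨n - 2, by omega⟩)}) ⊔
          SimpleGraph.fromEdgeSet {s(⟨0, by omega⟩, ⟨n - 1, by omega⟩)})) ^ 2) := by
  rw [graphH_eq (by omega)]
  exact hasLinearQuotients_edgeIdeal_sq K (isGapFree_graphH hn) isIndepSet_lastThree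
    (card_lastThree (by omega)).ge fun A => isCoveredByTwoEdges_graphH

end
end

section
/- Fix n ≥ 6 and let F be the star on [n] with edges {i, n} for 1 ≤ i ≤ n−3. Then I_F^s has linear quotients for every integer s ≥ 1. -/
open MvPolynomial

noncomputable section

/-!
If every edge of `G` contains the vertex `c`, then `I_G = x_c · (x_a : a ∈ N(c))`, so `I_G ^ s` is
`x_c ^ s` times the ideal generated by all monomials of degree `s` in the variables of `N(c)`. The
exponents of these generators satisfy the exchange property of a discrete polymatroid, and the
generators of a polymatroidal ideal in increasing lexicographic order have linear quotients: if `v`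
precedes `u` and `i` is the first index where they differ, then `v i < u i`, and exchanging `i` in
`u` for some `j` with `u j < v j` gives a generator dividing `x_j x^u`. It precedes `u` because
`i < j`, and `x_j` divides `x^v / gcd(x^u, x^v)`, which generates `(x^v) : x^u`.
-/

section MonomialIdeals

variable {R σ : Type*} [CommSemiring R]

lemma monomial_one_mem_span_monomial_image_iff [Nontrivial R] {D : Set (σ →₀ ℕ)} {d : σ →₀ ℕ} :
    monomial d (1 : R) ∈ Ideal.span ((monomial · 1) '' D) ↔ ∃ e ∈ D, e ≤ d := by
  classical
  simp [mem_ideal_span_monomial_image, support_monomial]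

lemma mem_colon_span_monomial_iff {D : Set (σ →₀ ℕ)} {u : σ →₀ ℕ} {f : MvPolynomial σ R} :
    f ∈ Submodule.colon (Ideal.span ((monomial · (1 : R)) '' D))
        (Ideal.span {monomial u (1 : R)}) ↔
      ∀ m ∈ f.support, ∃ v ∈ D, v ≤ m + u := by
  rw [Ideal.mem_colon_span_singleton, mem_ideal_span_monomial_image]
  have support_mul : (f * monomial u 1).support = f.support.map (addRightEmbedding u) :=
    AddMonoidAlgebra.support_coeff_mul_single f _ (by simp) _
  simp [support_mul]

lemma colon_span_monomial_eq_span_X_s7 {D : Set (σ →₀ ℕ)} {u : σ →₀ ℕ}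
    (hD : ∀ v ∈ D, ∃ j, u j < v j ∧ ∃ w ∈ D, w ≤ u + Finsupp.single j 1) :
    Submodule.colon (Ideal.span ((monomial · (1 : R)) '' D)) (Ideal.span {monomial u (1 : R)}) =
      Ideal.span (X '' {j | ∃ w ∈ D, w ≤ u + Finsupp.single j 1}) := by
  ext f
  rw [mem_colon_span_monomial_iff, mem_ideal_span_X_image]
  refine forall₂_congr fun m _ => ⟨?_, ?_⟩
  · rintro ⟨v, hv, hvm⟩
    obtain ⟨j, huv, hj⟩ := hD v hv
    have := hvm j
    exact ⟨j, hj, by simp only [Finsupp.add_apply] at this; lia⟩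
  · rintro ⟨j, ⟨w, hw, hwu⟩, hmj⟩
    have single_le : Finsupp.single j 1 ≤ m := by
      simpa [Nat.one_le_iff_ne_zero] using hmj
    exact ⟨w, hw, hwu.trans (by rw [add_comm m]; gcongr)⟩

lemma span_X_image_pow (A : Set σ) (s : ℕ) :
    (Ideal.span (X '' A) : Ideal (MvPolynomial σ R)) ^ s =
      Ideal.span ((monomial · 1) '' {d : σ →₀ ℕ | d.degree = s ∧ ↑d.support ⊆ A}) := by
  rw [Ideal.span, Submodule.span_pow, Finsupp.image_pow_eq_finsuppProd_image]
  simp [monomial_eq]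

lemma span_monomial_mul_span_monomial_image (a : σ →₀ ℕ) (D : Set (σ →₀ ℕ)) :
    Ideal.span {monomial a (1 : R)} * Ideal.span ((monomial · 1) '' D) =
      Ideal.span ((monomial · 1) '' ((a + ·) '' D)) := by
  simp [Ideal.span_mul_span', Set.image_image, monomial_mul]

end MonomialIdeals

lemma exists_lt_of_degree_le {σ : Type*} {u v : σ →₀ ℕ} (h : u.degree ≤ v.degree) {i : σ}
    (hi : v i < u i) : ∃ j, u j < v j := by
  by_contra! hvu
  obtain ⟨d, rfl⟩ := exists_add_of_le (show v ≤ u from hvu)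
  have : d = 0 := (Finsupp.degree_eq_zero_iff d).1 (by simpa using h)
  simp [this] at hi

/-- The exponent vectors of the generators of a polymatroidal ideal: a set of vectors of equal
degree with the exchange property of the bases of a discrete polymatroid. The empty set (the zero
ideal) is allowed, and the exchanged vector `w = u - eᵢ + eⱼ` is described without truncated
subtraction. -/
structure IsPolymatroidal {σ : Type*} (D : Set (σ →₀ ℕ)) : Prop where
  degree_eq : ∀ u ∈ D, ∀ v ∈ D, u.degree = v.degree
  exchange : ∀ u ∈ D, ∀ v ∈ D, ∀ i, v i < u i →
    ∃ j, u j < v j ∧ ∃ w ∈ D, w + Finsupp.single i 1 = u + Finsupp.single j 1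

lemma isPolymatroidal_setOf_degree_eq_support_subset {σ : Type*} (A : Set σ) (s : ℕ) :
    IsPolymatroidal {d : σ →₀ ℕ | d.degree = s ∧ ↑d.support ⊆ A} where
  degree_eq u hu v hv := hu.1.trans hv.1.symm
  exchange := by
    rintro u ⟨hu, huA⟩ v ⟨hv, hvA⟩ i hi
    obtain ⟨j, hj⟩ := exists_lt_of_degree_le (hu.trans hv.symm).le hi
    have single_le : Finsupp.single i 1 ≤ u := by simpa using Nat.one_le_of_lt hi
    obtain ⟨e, rfl⟩ := exists_add_of_le single_le
    refine ⟨j, hj, e + Finsupp.single j 1, ⟨?_, fun k hk => ?_⟩, by abel⟩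
    · simpa [add_comm] using hu
    · have : k = j ∨ e k ≠ 0 := by
        by_contra! h
        simp [h.1, h.2] at hk
      rcases this with rfl | hek
      · exact hvA (by simp; lia)
      · exact huA (by simp [hek])

namespace IsPolymatroidal

variable {σ : Type*} {D : Set (σ →₀ ℕ)}

lemma image_add_left (hD : IsPolymatroidal D) (a : σ →₀ ℕ) :
    IsPolymatroidal ((a + ·) '' D) where
  degree_eq := by
    rintro _ ⟨u, hu, rfl⟩ _ ⟨v, hv, rfl⟩
    simp [hD.degree_eq u hu v hv]
  exchange := by
    rintro _ ⟨u, hu, rfl⟩ _ ⟨v, hv, rfl⟩ i hi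
    obtain ⟨j, hj, w, hw, hwu⟩ := hD.exchange u hu v hv i (by simpa using hi)
    exact ⟨j, by simpa using hj, a + w, ⟨w, hw, rfl⟩, by simp only [add_assoc, hwu]⟩

lemma isAntichain (hD : IsPolymatroidal D) : IsAntichain (· ≤ ·) D := by
  intro u hu v hv hne huv
  obtain ⟨i, hi⟩ := Finsupp.ne_iff.1 hne
  obtain ⟨j, hj⟩ := exists_lt_of_degree_le (hD.degree_eq v hv u hu).le ((huv i).lt_of_ne hi)
  exact (huv j).not_gt hj

lemma finite [Finite σ] (hD : IsPolymatroidal D) : D.Finite := by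
  obtain rfl | ⟨u, hu⟩ := D.eq_empty_or_nonempty
  · exact Set.finite_empty
  · exact (Finsupp.finite_of_degree_eq u.degree).subset fun v hv => hD.degree_eq v hv u hu

lemma exists_lt_toLex_of_lt_toLex [LinearOrder σ] (hD : IsPolymatroidal D) {u v : σ →₀ ℕ}
    (hu : u ∈ D) (hv : v ∈ D) (hvu : toLex v < toLex u) :
    ∃ j, u j < v j ∧ ∃ w ∈ D, toLex w < toLex u ∧ w ≤ u + Finsupp.single j 1 := by
  obtain ⟨i, eq_of_lt, hi⟩ := Finsupp.Lex.lt_iff.1 hvu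
  obtain ⟨j, hj, w, hw, hwu⟩ := hD.exchange u hu v hv i hi
  have hij : i < j := by
    by_contra! hji
    rcases hji.lt_or_eq with hji | rfl
    · exact hj.ne' (eq_of_lt j hji)
    · exact hi.not_gt hj
  have w_apply (k : σ) : w k + Finsupp.single i 1 k = u k + Finsupp.single j 1 k :=
    DFunLike.congr_fun hwu k
  refine ⟨j, hj, w, hw, Finsupp.Lex.lt_iff.2 ⟨i, fun k hk => ?_, ?_⟩, hwu ▸ le_self_add⟩
  · simpa [hk.ne', (hk.trans hij).ne'] using w_apply k
  · have := w_apply i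
    simp only [Finsupp.single_eq_same, Finsupp.single_eq_of_ne hij.ne] at this
    simp only [ofLex_toLex]
    lia

end IsPolymatroidal

lemma exists_list_pairwise_lt {α β : Type*} [LinearOrder β] (f : α ↪ β) {D : Set α}
    (hD : D.Finite) : ∃ L : List α, (∀ d, d ∈ L ↔ d ∈ D) ∧ L.Pairwise (f · < f ·) := by
  let _ : LinearOrder α := LinearOrder.lift' f f.injective
  exact ⟨hD.toFinset.sort, by simp, hD.toFinset.sortedLT_sort.pairwise⟩

lemma isMinGen_span_monomial_image_iff {K : Type*} [Field K] {n : ℕ} {D : Set (Fin n →₀ ℕ)}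
    {d : Fin n →₀ ℕ} :
    IsMinGen (Ideal.span ((monomial · (1 : K)) '' D)) d ↔ Minimal (· ∈ D) d := by
  simp only [IsMinGen, monomial_one_mem_span_monomial_image_iff]
  constructor
  · rintro ⟨⟨e, he, hed⟩, hmin⟩
    have : e = d := by
      by_contra hne
      exact hmin e hed hne ⟨e, he, le_rfl⟩
    subst this
    refine ⟨he, fun e' he' hle => ?_⟩
    by_contra hnle
    exact hmin e' hle (fun h => hnle h.ge) ⟨e', he', le_rfl⟩
  · intro hd
    refine ⟨⟨d, hd.prop, le_rfl⟩, ?_⟩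
    rintro e hed hne ⟨e', he', hle⟩
    exact hne (hed.antisymm ((hd.le_of_le he' (hle.trans hed)).trans hle))

lemma isLinQuotOrder_of_pairwise (K : Type*) [Field K] {n : ℕ} {L : List (Fin n →₀ ℕ)}
    {r : (Fin n →₀ ℕ) → (Fin n →₀ ℕ) → Prop} [Std.Asymm r] (hL : L.Pairwise r)
    (h : ∀ u ∈ L, ∀ v ∈ L, r v u →
      ∃ j, u j < v j ∧ ∃ w ∈ L, r w u ∧ w ≤ u + Finsupp.single j 1) :
    IsLinQuotOrder K L := by
  intro i _
  have preceding_eq : {m : MvPolynomial (Fin n) K |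
      ∃ k : Fin L.length, k.val < i.val ∧ m = monomial (L.get k) 1} =
      (monomial · 1) '' {v | v ∈ L ∧ r v (L.get i)} := by
    ext m
    constructor
    · rintro ⟨k, hki, rfl⟩
      exact ⟨_, ⟨L.get_mem k, hL.rel_get_of_lt hki⟩, rfl⟩
    · rintro ⟨v, ⟨hv, hvi⟩, rfl⟩
      obtain ⟨k, rfl⟩ := List.get_of_mem hv
      refine ⟨k, ?_, rfl⟩
      by_contra! hik
      rcases (Fin.le_def.2 hik).lt_or_eq with hik | rfl
      · exact asymm hvi (hL.rel_get_of_lt hik)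
      · exact irrefl _ hvi
  rw [preceding_eq]
  refine ⟨_, colon_span_monomial_eq_span_X_s7 fun v hv => ?_⟩
  obtain ⟨j, hj, w, hw, hwi, hle⟩ := h _ (L.get_mem i) v hv.1 hv.2
  exact ⟨j, hj, w, ⟨hw, hwi⟩, hle⟩

theorem IsPolymatroidal.hasLinearQuotients (K : Type*) [Field K] {n : ℕ} {D : Set (Fin n →₀ ℕ)}
    (hD : IsPolymatroidal D) : HasLinearQuotients (Ideal.span ((monomial · (1 : K)) '' D)) := by
  obtain ⟨L, mem_L, sorted_L⟩ := exists_list_pairwise_lt toLex.toEmbedding hD.finite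
  have : Std.Asymm fun u v : Fin n →₀ ℕ => toLex u < toLex v := ⟨fun _ _ => lt_asymm⟩
  refine .inr ⟨L, sorted_L.imp fun h => ne_of_apply_ne toLex h.ne, fun d => ?_,
    isLinQuotOrder_of_pairwise K sorted_L ?_⟩
  · rw [mem_L, isMinGen_span_monomial_image_iff, hD.isAntichain.minimal_mem_iff]
  · simp only [mem_L]
    exact fun u hu v hv => hD.exists_lt_toLex_of_lt_toLex hu hv

lemma edgeIdeal_eq_span_X_mul_span_X_image (K : Type*) [Field K] {n : ℕ} {G : SimpleGraph (Fin n)}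
    {c : Fin n} (hG : ∀ i j, G.Adj i j → i = c ∨ j = c) :
    edgeIdeal K G = Ideal.span {X c} * Ideal.span (X '' G.neighborSet c) := by
  rw [Ideal.span_mul_span', edgeIdeal]
  congr 1
  ext p
  simp only [Set.singleton_mul, Set.image_image, Set.mem_image, Set.mem_ofPred_eq,
    SimpleGraph.mem_neighborSet]
  constructor
  · rintro ⟨i, j, hij, rfl⟩
    rcases hG i j hij with rfl | rfl
    · exact ⟨j, hij, rfl⟩
    · exact ⟨i, hij.symm, mul_comm _ _⟩
  · rintro ⟨a, ha, rfl⟩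
    exact ⟨c, a, ha, rfl⟩

lemma edgeIdeal_pow_eq_span_monomial_image (K : Type*) [Field K] {n : ℕ} {G : SimpleGraph (Fin n)}
    {c : Fin n} (hG : ∀ i j, G.Adj i j → i = c ∨ j = c) (s : ℕ) :
    edgeIdeal K G ^ s = Ideal.span ((monomial · 1) '' ((Finsupp.single c s + ·) ''
      {d : Fin n →₀ ℕ | d.degree = s ∧ ↑d.support ⊆ G.neighborSet c})) := by
  rw [edgeIdeal_eq_span_X_mul_span_X_image K hG, mul_pow, Ideal.span_singleton_pow,
    span_X_image_pow, X_pow_eq_monomial, span_monomial_mul_span_monomial_image]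

theorem star_powers_linear_quotients_general (K : Type*) [Field K] {n : ℕ}
    {G : SimpleGraph (Fin n)} {c : Fin n} (hG : ∀ i j, G.Adj i j → i = c ∨ j = c) (s : ℕ) :
    HasLinearQuotients (edgeIdeal K G ^ s) := by
  rw [edgeIdeal_pow_eq_span_monomial_image K hG]
  exact ((isPolymatroidal_setOf_degree_eq_support_subset _ s).image_add_left _).hasLinearQuotients K

lemma val_eq_of_starF_adj {n : ℕ} {i j : Fin n} (h : (starF n).Adj i j) :
    i.val = n - 1 ∨ j.val = n - 1 := by
  rw [starF, SimpleGraph.fromRel_adj] at h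
  lia

/-- Corollary `cor3`: for `n ≥ 6` and the star `F` on `[n]` with edges `{i, n}`,
`1 ≤ i ≤ n-3`, the power `I_F^s` has linear quotients for every `s ≥ 1`. -/
theorem star_powers_linear_quotients
    (K : Type*) [Field K] (n : ℕ) (hn : 6 ≤ n) (s : ℕ) (hs : 1 ≤ s) :
    HasLinearQuotients (edgeIdeal K (starF n) ^ s) := by
  have hc : n - 1 < n := by lia
  exact star_powers_linear_quotients_general K (c := ⟨n - 1, hc⟩)
    (fun i j h => by simpa only [Fin.ext_iff] using val_eq_of_starF_adj h) s
end
end
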